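/- arXiv:1410.4645 — 2 statements merged into one kernel-verified Lean document; each statement's English description precedes it below -/
import Mathlib

section
/- Let G be a countable discrete amenable group acting continuously on a compact metric space (X,d), let μ be a G-invariant, G-ergodic Borel probability measure on X, and let {F_n} be a tempered Følner sequence in G with lim_{n→∞} |F_n|/log n = ∞. Then for μ-almost every x ∈ X, lim_{δ→0} liminf_{n→∞} −(1/|F_n|) log μ(B_{F_n}(x,δ)) ≥ h_μ(X,G). -/
open Filter Set MeasureTheory Topology ENNReal Pointwise

variable {G X : Type*}

section Defs

variable [Group G] [MetricSpace X] [MulAction G X]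

/-- The Bowen ball `B_F(x,ε) = {y : d(gx,gy) < ε for all g ∈ F}`. -/
def bowenBall (F : Finset G) (x : X) (ε : ℝ) : Set X :=
  {y : X | ∀ g ∈ F, dist (g • x) (g • y) < ε}

/-- A Følner sequence: `|F_n ∆ gF_n|/|F_n| → 0` for every `g ∈ G`. -/
def IsFolnerSeq (F : ℕ → Finset G) : Prop :=
  ∀ g : G, Tendsto
    (fun n => ((symmDiff (F n : Set G) ((g * ·) '' (F n : Set G))).ncard : ℝ) / (F n).card)
    atTop (𝓝 0)

/-- A tempered sequence: `|⋃_{k<n} F_k⁻¹ F_n| ≤ C |F_n|` for all `n`. -/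
def IsTemperedSeq (F : ℕ → Finset G) : Prop :=
  ∃ C : ℝ, 0 < C ∧ ∀ n : ℕ,
    ((⋃ k ∈ Finset.range n, ((F k : Set G)⁻¹ * (F n : Set G))).ncard : ℝ) ≤ C * (F n).card

/-- The growth condition `lim_n |F_n| / log n = ∞`. -/
def GrowthCond (F : ℕ → Finset G) : Prop :=
  Tendsto (fun n : ℕ => ((F n).card : ℝ) / Real.log n) atTop atTop

/-- `M(Z,N,ε,s,{F_n})`: infimum of `∑ exp(-s |F_{n_i}|)` over countable families of Bowen
balls `B_{F_{n_i}}(x_i,ε)`, `n_i ≥ N`, covering `Z`. -/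
noncomputable def ballM (F : ℕ → Finset G) (Z : Set X) (N : ℕ) (ε s : ℝ) : ℝ≥0∞ :=
  ⨅ (I : Set (X × ℕ)) (_ : I.Countable) (_ : ∀ p ∈ I, N ≤ p.2)
    (_ : Z ⊆ ⋃ p ∈ I, bowenBall (F p.2) p.1 ε),
    ∑' p : I, ENNReal.ofReal (Real.exp (-s * ((F (p : X × ℕ).2).card : ℝ)))

/-- `M(Z,ε,s,{F_n}) = lim_{N→∞} M(Z,N,ε,s,{F_n})` (the quantity is nondecreasing in `N`). -/
noncomputable def ballMN (F : ℕ → Finset G) (Z : Set X) (ε s : ℝ) : ℝ≥0∞ :=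
  ⨆ N : ℕ, ballM F Z N ε s

/-- `M(Z,s,{F_n}) = lim_{ε→0} M(Z,ε,s,{F_n})` (the quantity is nondecreasing as `ε` decreases). -/
noncomputable def ballMtot (F : ℕ → Finset G) (Z : Set X) (s : ℝ) : ℝ≥0∞ :=
  ⨆ (ε : ℝ) (_ : 0 < ε), ballMN F Z ε s

/-- The Bowen topological entropy of `Z` along `{F_n}`: the critical value of `s` at which
`M(Z,s,{F_n})` jumps from `+∞` to `0`, i.e. `inf {s : M(Z,s,{F_n}) = 0}`. -/
noncomputable def bowenEnt (F : ℕ → Finset G) (Z : Set X) : ℝ≥0∞ :=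
  ⨅ (s : ℝ) (_ : ballMtot F Z s = 0), ENNReal.ofReal s

/-- The weighted quantity `W(f,N,ε,s,{F_n})`. -/
noncomputable def wtW (F : ℕ → Finset G) (f : X → ℝ≥0∞) (N : ℕ) (ε s : ℝ) : ℝ≥0∞ :=
  ⨅ (I : Set (X × ℕ)) (c : X × ℕ → ℝ≥0∞) (_ : I.Countable)
    (_ : ∀ p ∈ I, N ≤ p.2 ∧ 0 < c p ∧ c p < ⊤)
    (_ : ∀ x : X, f x ≤ ∑' p : I, c (p : X × ℕ) *
        (bowenBall (F (p : X × ℕ).2) (p : X × ℕ).1 ε).indicator (fun _ => (1 : ℝ≥0∞)) x),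
    ∑' p : I, c (p : X × ℕ) * ENNReal.ofReal (Real.exp (-s * ((F (p : X × ℕ).2).card : ℝ)))

/-- `W(Z,N,ε,s,{F_n}) = W(χ_Z,N,ε,s,{F_n})`. -/
noncomputable def wtWset (F : ℕ → Finset G) (Z : Set X) (N : ℕ) (ε s : ℝ) : ℝ≥0∞ :=
  wtW F (Z.indicator fun _ => (1 : ℝ≥0∞)) N ε s

/-- `W(Z,ε,s,{F_n}) = lim_{N→∞} W(Z,N,ε,s,{F_n})`. -/
noncomputable def wtWN (F : ℕ → Finset G) (Z : Set X) (ε s : ℝ) : ℝ≥0∞ :=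
  ⨆ N : ℕ, wtWset F Z N ε s

/-- `W(Z,s,{F_n}) = lim_{ε→0} W(Z,ε,s,{F_n})`. -/
noncomputable def wtWtot (F : ℕ → Finset G) (Z : Set X) (s : ℝ) : ℝ≥0∞ :=
  ⨆ (ε : ℝ) (_ : 0 < ε), wtWN F Z ε s

/-- The weighted Bowen topological entropy of `Z` along `{F_n}`. -/
noncomputable def wtBowenEnt (F : ℕ → Finset G) (Z : Set X) : ℝ≥0∞ :=
  ⨅ (s : ℝ) (_ : wtWtot F Z s = 0), ENNReal.ofReal s

/-- A finite open cover of `X`. -/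
def IsFinOpenCover (𝒰 : Finset (Set X)) : Prop :=
  (∀ U ∈ 𝒰, IsOpen U) ∧ ⋃₀ (𝒰 : Set (Set X)) = Set.univ

/-- `N(⋁_{g∈F} g⁻¹𝒰)`: the minimal cardinality of a subcover of the refined cover, whose members
are the sets `X(𝐔) = ⋂_{g∈F} g⁻¹ U_g` with `U_g ∈ 𝒰`. -/
noncomputable def coverNum (𝒰 : Finset (Set X)) (F : Finset G) : ℕ :=
  sInf {k : ℕ | ∃ Λ : Finset (G → Set X), Λ.card = k ∧
    (∀ u ∈ Λ, ∀ g ∈ F, u g ∈ 𝒰) ∧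
    (⋃ u ∈ Λ, ⋂ g ∈ F, (fun y => g • y) ⁻¹' u g) = Set.univ}

/-- `h_top(G,𝒰) = lim_n (1/|F_n|) log N(⋁_{g∈F_n} g⁻¹𝒰)` (the limit exists by Ornstein–Weiss,
hence equals the `limsup`). -/
noncomputable def coverTopEnt (F : ℕ → Finset G) (𝒰 : Finset (Set X)) : ℝ :=
  limsup (fun n => Real.log (coverNum 𝒰 (F n)) / (F n).card) atTop

/-- The topological entropy `h_top(X,G)`, the supremum over finite open covers. -/
noncomputable def topEnt (X : Type*) [MetricSpace X] [MulAction G X] (F : ℕ → Finset G) : ℝ≥0∞ :=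
  ⨆ (𝒰 : Finset (Set X)) (_ : IsFinOpenCover 𝒰), ENNReal.ofReal (coverTopEnt F 𝒰)

/-- `M(Z,𝒰,N,s,{F_n})`: infimum of `∑_{𝐔∈Λ} exp(-s m(𝐔))` over collections
`Λ ⊆ ⋃_{j≥N} 𝒲_{F_j}(𝒰)` covering `Z`; an element `𝐔 ∈ 𝒲_{F_j}(𝒰)` is encoded as a pair
`(j, u)` with `u g ∈ 𝒰` for `g ∈ F_j` (and `u g = ∅` elsewhere), `X(𝐔) = ⋂_{g∈F_j} g⁻¹ (u g)`
and `m(𝐔) = |F_j|`. -/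
noncomputable def covM (F : ℕ → Finset G) (𝒰 : Finset (Set X)) (Z : Set X) (N : ℕ) (s : ℝ) :
    ℝ≥0∞ :=
  ⨅ (Λ : Set (ℕ × (G → Set X)))
    (_ : ∀ p ∈ Λ, N ≤ p.1 ∧ (∀ g ∈ F p.1, p.2 g ∈ 𝒰) ∧ (∀ g ∉ F p.1, p.2 g = ∅))
    (_ : Z ⊆ ⋃ p ∈ Λ, ⋂ g ∈ F p.1, (fun y => g • y) ⁻¹' p.2 g),
    ∑' p : Λ, ENNReal.ofReal (Real.exp (-s * ((F (p : ℕ × (G → Set X)).1).card : ℝ)))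

/-- `M(Z,𝒰,s,{F_n}) = lim_{N→∞} M(Z,𝒰,N,s,{F_n})`. -/
noncomputable def covMtot (F : ℕ → Finset G) (𝒰 : Finset (Set X)) (Z : Set X) (s : ℝ) : ℝ≥0∞ :=
  ⨆ N : ℕ, covM F 𝒰 Z N s

/-- The cover-based Bowen topological entropy `h^B_top(𝒰,Z,{F_n}) = inf {s : M(Z,𝒰,s,{F_n}) = 0}`. -/
noncomputable def covBowenEnt (F : ℕ → Finset G) (𝒰 : Finset (Set X)) (Z : Set X) : ℝ≥0∞ :=
  ⨅ (s : ℝ) (_ : covMtot F 𝒰 Z s = 0), ENNReal.ofReal s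

/-- `diam(𝒰) = max {diam U : U ∈ 𝒰}`. -/
noncomputable def coverDiam (𝒰 : Finset (Set X)) : ℝ≥0∞ :=
  ⨆ U ∈ 𝒰, EMetric.diam U

end Defs

section MeasureDefs

variable [Group G] [MetricSpace X] [MulAction G X] [MeasurableSpace X]

/-- The quantity `-(1/m) log μ(B)`, with value `+∞` when `μ B = 0`. -/
noncomputable def locTerm (μ : Measure X) (B : Set X) (m : ℕ) : ℝ≥0∞ :=
  if μ B = 0 then ⊤ else ENNReal.ofReal (-(Real.log ((μ B).toReal)) / (m : ℝ))

/-- The lower local entropy `h̲_μ^{loc}(x,ε,{F_n}) = liminf_n -(1/|F_n|) log μ(B_{F_n}(x,ε))`. -/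
noncomputable def lowLoc (μ : Measure X) (F : ℕ → Finset G) (x : X) (ε : ℝ) : ℝ≥0∞ :=
  liminf (fun n => locTerm μ (bowenBall (F n) x ε) (F n).card) atTop

/-- The upper local entropy `limsup_n -(1/|F_n|) log μ(B_{F_n}(x,ε))`. -/
noncomputable def upLoc (μ : Measure X) (F : ℕ → Finset G) (x : X) (ε : ℝ) : ℝ≥0∞ :=
  limsup (fun n => locTerm μ (bowenBall (F n) x ε) (F n).card) atTop

/-- `h̲_μ^{loc}(x,{F_n}) = lim_{ε→0} h̲_μ^{loc}(x,ε,{F_n})` (a monotone limit, i.e. the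
supremum over `ε > 0`). -/
noncomputable def lowLocPt (μ : Measure X) (F : ℕ → Finset G) (x : X) : ℝ≥0∞ :=
  ⨆ (ε : ℝ) (_ : 0 < ε), lowLoc μ F x ε

/-- `h̲_μ^{loc}({F_n}) = ∫_X h̲_μ^{loc}(x,{F_n}) dμ(x)`. -/
noncomputable def lowLocEnt (μ : Measure X) (F : ℕ → Finset G) : ℝ≥0∞ :=
  ∫⁻ x, lowLocPt μ F x ∂μ

/-- A finite measurable partition of `X`, presented as `P : Fin k → Set X`. -/
def IsMeasPartition {k : ℕ} (P : Fin k → Set X) : Prop :=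
  (∀ i, MeasurableSet (P i)) ∧ Pairwise (Function.onFun Disjoint P) ∧ (⋃ i, P i) = Set.univ

/-- The static entropy `H_μ(𝒫_F)` of the join `𝒫_F = ⋁_{g∈F} g⁻¹𝒫`; its atoms are the
nonempty sets `⋂_{g∈F} g⁻¹ P(u g)` (distinct choices `u` yield disjoint atoms, and empty
atoms contribute `0`). -/
noncomputable def partH (μ : Measure X) {k : ℕ} (P : Fin k → Set X) (F : Finset G) : ℝ :=
  letI := Classical.decEq G
  ∑ u : (↥F → Fin k),
    Real.negMulLog ((μ (⋂ g : ↥F, (fun y => (g : G) • y) ⁻¹' P (u g))).toReal)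

/-- `h_μ(G,𝒫) = liminf_n (1/|F_n|) H_μ(𝒫_{F_n})`. -/
noncomputable def partEnt (μ : Measure X) (F : ℕ → Finset G) {k : ℕ} (P : Fin k → Set X) : ℝ :=
  liminf (fun n => partH μ P (F n) / (F n).card) atTop

/-- The measure-theoretic entropy `h_μ(X,G) = sup_𝒫 h_μ(G,𝒫)` (it is independent of the
Følner sequence used to compute it). -/
noncomputable def measEnt (μ : Measure X) (F : ℕ → Finset G) : ℝ≥0∞ :=
  ⨆ (k : ℕ) (P : Fin k → Set X) (_ : IsMeasPartition P), ENNReal.ofReal (partEnt μ F P)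

/-- Ergodicity of the `G`-action w.r.t. `μ`. -/
def IsErgodicGAction (G : Type*) [Group G] [MulAction G X] (μ : Measure X) : Prop :=
  ∀ A : Set X, MeasurableSet A → (∀ g : G, (g • ·) ⁻¹' A = A) → μ A = 0 ∨ μ A = 1

end MeasureDefs

section BKCyl

/-- Mass of the cylinder of points whose name agrees with `u` on `S`. -/
noncomputable def bkCyl [Group G] [MulAction G X] [MeasurableSpace X] (μ : Measure X) {k : ℕ}
    (ι : X → Fin k) (S : Finset G) (u : G → Fin k) : ℝ≥0∞ :=
  μ {x | ∀ g ∈ S, ι (g • x) = u g}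

variable [Group G] [MulAction G X] [MeasurableSpace X] [MeasurableConstSMul G X]
  (μ : Measure X) {k : ℕ} {ι : X → Fin k}

lemma bk_meas_coord (hι : Measurable ι) (g : G) (a : Fin k) :
    MeasurableSet {x | ι (g • x) = a} :=
  (hι.comp (measurable_const_smul g)) (measurableSet_singleton a)

lemma bk_meas_cyl (hι : Measurable ι) (S : Finset G) (u : G → Fin k) :
    MeasurableSet {x | ∀ g ∈ S, ι (g • x) = u g} := by
  have : {x | ∀ g ∈ S, ι (g • x) = u g} = ⋂ g ∈ S, {x | ι (g • x) = u g} := by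
    ext x; simp
  rw [this]
  exact Finset.measurableSet_biInter S fun g _ => bk_meas_coord hι g _

lemma bkCyl_congr (S : Finset G) {u v : G → Fin k} (h : ∀ g ∈ S, u g = v g) :
    bkCyl μ ι S u = bkCyl μ ι S v := by
  unfold bkCyl
  congr 1
  ext x
  simp only [mem_ofPred_eq]
  exact forall₂_congr fun g hg => by rw [h g hg]

lemma bkCyl_update_notMem [DecidableEq G] (S : Finset G) (u : G → Fin k) {i : G} (hi : i ∉ S)
    (a : Fin k) : bkCyl μ ι S (Function.update u i a) = bkCyl μ ι S u := by
  refine bkCyl_congr μ S fun g hg => ?_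
  rw [Function.update_of_ne]
  rintro rfl; exact hi hg

lemma bkCyl_sum_update [DecidableEq G] (hι : Measurable ι) (S : Finset G) (u : G → Fin k) {i : G}
    (hi : i ∈ S) :
    ∑ a, bkCyl μ ι S (Function.update u i a) = bkCyl μ ι (S.erase i) u := by
  unfold bkCyl
  rw [← measure_biUnion_finset (s := Finset.univ)
    (f := fun a => {x | ∀ g ∈ S, ι (g • x) = Function.update u i a g})]
  · congr 1
    ext x
    simp only [mem_iUnion, mem_ofPred_eq, Finset.mem_univ, Finset.mem_erase, exists_prop, true_and]
    constructor
    · rintro ⟨a, h⟩ g ⟨hg, hgS⟩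
      rw [h g hgS, Function.update_of_ne hg]
    · intro h
      refine ⟨ι (i • x), fun g hg => ?_⟩
      by_cases hgi : g = i
      · subst hgi; simp
      · rw [Function.update_of_ne hgi]; exact h g ⟨hgi, hg⟩
  · intro a _ b _ hab
    rw [Function.onFun, Set.disjoint_left]
    intro x hx hx'
    have h1 := hx i hi
    have h2 := hx' i hi
    simp at h1 h2
    exact hab (h1.symm.trans h2)
  · intro a _
    exact bk_meas_cyl hι S _

lemma bkCyl_measurable (S : Finset G) : Measurable (fun u : G → Fin k => bkCyl μ ι S u) := by
  classical
  rcases isEmpty_or_nonempty (Fin k) with h | h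
  · rcases isEmpty_or_nonempty (G → Fin k) with h' | h'
    · exact measurable_of_empty _
    · exact (IsEmpty.false (h'.some 1)).elim
  have : (fun u : G → Fin k => bkCyl μ ι S u) =
      (fun v : (S → Fin k) => bkCyl μ ι S (fun g => if h : g ∈ S then v ⟨g, h⟩ else Classical.choice ‹Nonempty (Fin k)›)) ∘
        (fun (u : G → Fin k) (g : S) => u g) := by
    funext u
    refine bkCyl_congr μ S fun g hg => ?_
    simp [hg]
  rw [this]
  refine (measurable_of_countable _).comp ?_
  fun_prop

/-- One coordinate step of the Finner/Shearer inequality. -/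
lemma bk_finner_step [DecidableEq G] {C : Type*} (hι : Measurable ι) (s : Finset C)
    (S : C → Finset G) (m : ℕ) (hm : 0 < m)
    (u : G → Fin k) (i : G) (hi : (s.filter fun c => i ∈ S c).card = m) :
    ∑ a, ∏ c ∈ s, bkCyl μ ι (S c) (Function.update u i a) ^ (1 / (m : ℝ)) ≤
      ∏ c ∈ s, bkCyl μ ι ((S c).erase i) u ^ (1 / (m : ℝ)) := by
  classical
  have hsplit : ∀ a, ∏ c ∈ s, bkCyl μ ι (S c) (Function.update u i a) ^ (1 / (m : ℝ)) =
      (∏ c ∈ s.filter (fun c => i ∈ S c),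
        bkCyl μ ι (S c) (Function.update u i a) ^ (1 / (m : ℝ))) *
      ∏ c ∈ s.filter (fun c => ¬ i ∈ S c), bkCyl μ ι ((S c).erase i) u ^ (1 / (m : ℝ)) := by
    intro a
    rw [← Finset.prod_filter_mul_prod_filter_not s (fun c => i ∈ S c)]
    congr 1
    refine Finset.prod_congr rfl fun c hc => ?_
    have hc' := (Finset.mem_filter.1 hc).2
    rw [bkCyl_update_notMem μ _ _ hc', Finset.erase_eq_of_notMem hc']
  simp_rw [hsplit]
  rw [← Finset.sum_mul, ← Finset.prod_filter_mul_prod_filter_not s (fun c => i ∈ S c)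
    (fun c => bkCyl μ ι ((S c).erase i) u ^ (1 / (m : ℝ)))]
  gcongr
  have h := ENNReal.lintegral_prod_norm_pow_le (μ := (Measure.count : Measure (Fin k)))
    (s.filter (fun c => i ∈ S c))
    (f := fun c a => bkCyl μ ι (S c) (Function.update u i a)) (p := fun _ => 1 / (m : ℝ))
    (fun _ _ => (measurable_of_countable _).aemeasurable)
    (by
      rw [Finset.sum_const, hi, nsmul_eq_mul]
      field_simp)
    (fun _ _ => by positivity)
  rw [lintegral_count, tsum_fintype] at h
  refine h.trans (le_of_eq ?_)
  refine Finset.prod_congr rfl fun c hc => ?_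
  rw [lintegral_count, tsum_fintype, bkCyl_sum_update μ hι _ _ (Finset.mem_filter.1 hc).2]

lemma bk_finner [DecidableEq G] {C : Type*} (hι : Measurable ι) (s : Finset C)
    (m : ℕ) (hm : 0 < m) (V : Finset G) : ∀ (S : C → Finset G),
    (∀ i ∈ V, (s.filter fun c => i ∈ S c).card = m) → ∀ u : G → Fin k,
    lmarginal (fun _ => (Measure.count : Measure (Fin k))) V
      (fun u => ∏ c ∈ s, bkCyl μ ι (S c) u ^ (1 / (m : ℝ))) u ≤
      ∏ c ∈ s, bkCyl μ ι ((S c) \ V) u ^ (1 / (m : ℝ)) := by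
  induction V using Finset.induction_on with
  | empty => intro S _ u; simp
  | insert i V hiV ih =>
    intro S hS u
    rw [lmarginal_insert' _ _ hiV]
    · calc _ ≤ lmarginal (fun _ => (Measure.count : Measure (Fin k))) V
            (fun u => ∏ c ∈ s, bkCyl μ ι ((S c).erase i) u ^ (1 / (m : ℝ))) u := by
            refine lmarginal_mono ?_ u
            intro u
            simp only
            rw [lintegral_count, tsum_fintype]
            exact bk_finner_step μ hι s S m hm u i (hS i (Finset.mem_insert_self _ _))
        _ ≤ _ := by
            refine (ih _ ?_ u).trans (le_of_eq ?_)
            · intro j hj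
              rw [← hS j (Finset.mem_insert_of_mem hj)]
              congr 1
              refine Finset.filter_congr fun c _ => ?_
              rw [Finset.mem_erase]
              refine and_iff_right ?_
              rintro rfl; exact hiV hj
            · refine Finset.prod_congr rfl fun c _ => ?_
              congr 2
              ext g; simp; tauto
    · refine Finset.measurable_prod _ fun c _ => ?_
      exact (bkCyl_measurable μ _).pow_const _

/-- The code weight: geometric mean of the cylinder masses over the translates of `K`. -/
noncomputable def bkKap [DecidableEq G] (ι : X → Fin k) (K V : Finset G) (u : G → Fin k) : ℝ≥0∞ :=
  ∏ c ∈ K⁻¹ * V, bkCyl μ ι ((K * {c}) ∩ V) u ^ (1 / (K.card : ℝ))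

/-- Kraft inequality. -/
lemma bk_kraft [IsProbabilityMeasure μ] [DecidableEq G] (hι : Measurable ι) (K V : Finset G)
    (hK : K.Nonempty) (u : G → Fin k) :
    ∑ v : (V → Fin k), bkKap μ ι K V (Function.updateFinset u V v) ≤ 1 := by
  have h := bk_finner μ hι (K⁻¹ * V) K.card hK.card_pos V (fun c => (K * {c}) ∩ V) ?_ u
  · have h2 : ∏ c ∈ K⁻¹ * V, bkCyl μ ι (((K * {c}) ∩ V) \ V) u ^ (1 / (K.card : ℝ)) = 1 := by
      refine Finset.prod_eq_one fun c _ => ?_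
      have : ((K * {c}) ∩ V) \ V = ∅ := by ext; simp; 
      rw [this]
      simp [bkCyl]
    rw [h2] at h
    refine le_trans (le_of_eq ?_) h
    unfold lmarginal
    rw [lintegral_fintype]
    refine Finset.sum_congr rfl fun v _ => ?_
    rw [Measure.pi_singleton]
    simp [bkKap]
  · intro i hi
    rw [← Finset.card_image_of_injective K (inv_injective.comp (mul_right_injective (i⁻¹)) )]
    congr 1
    ext c
    simp only [Finset.mem_filter, Finset.mem_mul, Finset.mem_inv, Finset.mem_inter,
      Finset.mem_singleton, Finset.mem_image, Function.comp]
    constructor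
    · rintro ⟨-, ⟨κ, hκ, _, rfl, rfl⟩, _⟩
      exact ⟨κ, hκ, by group⟩
    · rintro ⟨κ, hκ, rfl⟩
      exact ⟨⟨κ⁻¹, ⟨κ, hκ, rfl⟩, i, hi, by group⟩, ⟨κ, hκ, _, rfl, by group⟩, hi⟩

/-- Basic code estimate. -/
lemma bk_code [IsProbabilityMeasure μ] [DecidableEq G] (hι : Measurable ι) (K V F : Finset G)
    (hK : K.Nonempty) (hV : V ⊆ F) (u : G → Fin k) (s : ℝ≥0∞) :
    μ {x | (∀ g ∈ F \ V, ι (g • x) = u g) ∧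
      bkCyl μ ι F (fun g => ι (g • x)) ≤ s * bkKap μ ι K V (fun g => ι (g • x))} ≤ s := by
  classical
  have hkapc : ∀ {u v : G → Fin k}, (∀ g ∈ V, u g = v g) → bkKap μ ι K V u = bkKap μ ι K V v := by
    intro u v h
    unfold bkKap
    refine Finset.prod_congr rfl fun c _ => ?_
    rw [bkCyl_congr μ _ (fun g hg => h g (Finset.mem_inter.1 hg).2)]
  calc _ ≤ μ (⋃ v : (V → Fin k), {x | (∀ g ∈ F, ι (g • x) = Function.updateFinset u V v g) ∧
        bkCyl μ ι F (Function.updateFinset u V v) ≤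
          s * bkKap μ ι K V (Function.updateFinset u V v)}) := by
        refine measure_mono ?_
        rintro x ⟨h1, h2⟩
        rw [mem_iUnion]
        refine ⟨fun g => ι ((g : G) • x), ?_⟩
        have h3 : ∀ g ∈ F, ι (g • x) =
            Function.updateFinset u V (fun g => ι ((g : G) • x)) g := by
          intro g hg
          by_cases hgV : g ∈ V
          · simp [Function.updateFinset, hgV]
          · simp [Function.updateFinset, hgV, h1 g (Finset.mem_sdiff.2 ⟨hg, hgV⟩)]
        refine ⟨h3, ?_⟩
        rw [← bkCyl_congr μ F h3, ← hkapc (fun g hg => h3 g (hV hg))]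
        exact h2
    _ ≤ ∑ v : (V → Fin k), μ {x | (∀ g ∈ F, ι (g • x) = Function.updateFinset u V v g) ∧
        bkCyl μ ι F (Function.updateFinset u V v) ≤
          s * bkKap μ ι K V (Function.updateFinset u V v)} := measure_iUnion_fintype_le _ _
    _ ≤ ∑ v : (V → Fin k), s * bkKap μ ι K V (Function.updateFinset u V v) := by
        refine Finset.sum_le_sum fun v _ => ?_
        by_cases h : bkCyl μ ι F (Function.updateFinset u V v) ≤
          s * bkKap μ ι K V (Function.updateFinset u V v)
        · refine le_trans (measure_mono ?_) h
          rintro x ⟨h1, -⟩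
          exact h1
        · simp [h]
    _ ≤ s := by
        rw [← Finset.mul_sum]
        exact mul_le_of_le_one_right' (bk_kraft μ hι K V hK u)

end BKCyl

section BKInfo

variable [Group G] [MulAction G X] [MeasurableSpace X]

/-- Name of a point. -/
def bkName {k : ℕ} (ι : X → Fin k) (x : X) : G → Fin k := fun g => ι (g • x)

/-- Information function. -/
noncomputable def bkI (μ : Measure X) {k : ℕ} (ι : X → Fin k) (S : Finset G) (x : X) : ℝ :=
  -Real.log (bkCyl μ ι S (bkName ι x)).toReal

/-- Mass of a finite name. -/
noncomputable def bkMass (μ : Measure X) {k : ℕ} (ι : X → Fin k) (S : Finset G)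
    (v : S → Fin k) : ℝ := (μ {x | ∀ g : S, ι ((g : G) • x) = v g}).toReal

variable (μ : Measure X) {k : ℕ} {ι : X → Fin k}

lemma bkI_eq (S : Finset G) (x : X) :
    bkI μ ι S x = -Real.log (bkMass μ ι S (fun g => ι ((g : G) • x))) := by
  unfold bkI bkCyl bkMass bkName
  simp

lemma bkI_nonneg [IsProbabilityMeasure μ] (S : Finset G) (x : X) : 0 ≤ bkI μ ι S x := by
  unfold bkI
  have : (bkCyl μ ι S (bkName ι x)).toReal ≤ 1 := by
    refine ENNReal.toReal_le_of_le_ofReal zero_le_one ?_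
    simpa [bkCyl] using prob_le_one
  have := Real.log_nonpos ENNReal.toReal_nonneg this
  linarith

lemma bkI_bdd (S : Finset G) : ∃ M : ℝ, 0 ≤ M ∧ ∀ x, bkI μ ι S x ≤ M := by
  obtain ⟨M, hM⟩ := (Set.finite_range
    (fun v : S → Fin k => -Real.log (bkMass μ ι S v))).bddAbove
  refine ⟨max M 0, le_max_right _ _, fun x => ?_⟩
  rw [bkI_eq]
  exact (hM ⟨_, rfl⟩).trans (le_max_left _ _)

lemma bkI_smul [MeasurableConstSMul G X] [SMulInvariantMeasure G X μ] [DecidableEq G]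
    (S : Finset G) (h : G) (x : X) :
    bkI μ ι (S * {h}) x = bkI μ ι S (h • x) := by
  unfold bkI bkCyl bkName
  congr 3
  have : {y | ∀ g ∈ S * {h}, ι (g • y) = ι (g • x)} =
      (fun y => h • y) ⁻¹' {y | ∀ g ∈ S, ι (g • y) = ι (g • h • x)} := by
    ext y
    simp [Finset.mem_mul, mul_smul]
  rw [this, measure_preimage_smul]

variable [MeasurableConstSMul G X]

lemma bk_meas_restr (hι : Measurable ι) (S : Finset G) :
    Measurable (fun (x : X) (g : S) => ι ((g : G) • x)) :=
  measurable_pi_lambda _ fun g => hι.comp (measurable_const_smul (g : G))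

lemma bkI_measurable (hι : Measurable ι) (S : Finset G) : Measurable (bkI μ ι S) := by
  have : bkI μ ι S = (fun v => -Real.log (bkMass μ ι S v)) ∘
      (fun (x : X) (g : S) => ι ((g : G) • x)) := by
    funext x; exact bkI_eq μ S x
  rw [this]
  exact (measurable_of_countable _).comp (bk_meas_restr hι S)

lemma bk_integral_fin [DecidableEq G] [IsFiniteMeasure μ] (hι : Measurable ι) (S : Finset G)
    (Φ : (S → Fin k) → ℝ) :
    ∫ x, Φ (fun g => ι ((g : G) • x)) ∂μ = ∑ v, bkMass μ ι S v * Φ v := by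
  classical
  rw [← integral_map (φ := fun (x : X) (g : S) => ι ((g : G) • x)) (f := Φ)
    (bk_meas_restr hι S).aemeasurable (measurable_of_countable _).aestronglyMeasurable]
  rw [integral_fintype (Integrable.of_finite)]
  refine Finset.sum_congr rfl fun v _ => ?_
  rw [smul_eq_mul, Measure.real, Measure.map_apply (bk_meas_restr hι S) (measurableSet_singleton _)]
  unfold bkMass
  congr 3
  ext x
  simp [funext_iff]

lemma bkI_integrable [IsProbabilityMeasure μ] (hι : Measurable ι) (S : Finset G) :
    Integrable (bkI μ ι S) μ := by
  obtain ⟨M, hM0, hM⟩ := bkI_bdd μ (ι := ι) S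
  refine Integrable.of_bound (bkI_measurable μ hι S).aestronglyMeasurable M (ae_of_all _ fun x => ?_)
  rw [Real.norm_eq_abs, abs_of_nonneg (bkI_nonneg μ S x)]
  exact hM x

lemma bkI_integral [DecidableEq G] [IsProbabilityMeasure μ] (hι : Measurable ι) (S : Finset G) :
    ∫ x, bkI μ ι S x ∂μ = ∑ v, Real.negMulLog (bkMass μ ι S v) := by
  simp_rw [bkI_eq]
  rw [bk_integral_fin μ hι S (fun v => -Real.log (bkMass μ ι S v))]
  refine Finset.sum_congr rfl fun v _ => ?_
  rw [Real.negMulLog]; ring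

lemma bkI_pos_ae [IsProbabilityMeasure μ] [Countable G] :
    ∀ᵐ x ∂μ, ∀ S : Finset G, bkCyl μ ι S (bkName ι x) ≠ 0 := by
  rw [ae_all_iff]
  intro S
  rw [ae_iff]
  have : {x | ¬ bkCyl μ ι S (bkName ι x) ≠ 0} ⊆
      ⋃ v ∈ {v : S → Fin k | μ {x | ∀ g : S, ι ((g : G) • x) = v g} = 0},
        {x | ∀ g : S, ι ((g : G) • x) = v g} := by
    intro x hx
    simp only [ne_eq, not_not, mem_ofPred_eq] at hx
    rw [mem_iUnion₂]
    refine ⟨fun g => ι ((g : G) • x), ?_, fun g => rfl⟩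
    rw [← hx]
    unfold bkCyl bkName
    simp
  refine measure_mono_null this ?_
  rw [measure_biUnion_null_iff (Set.to_countable _)]
  intro v hv
  exact hv

lemma bkCyl_eq_exp [IsProbabilityMeasure μ] {S : Finset G} {x : X}
    (h : bkCyl μ ι S (bkName ι x) ≠ 0) :
    bkCyl μ ι S (bkName ι x) = ENNReal.ofReal (Real.exp (-bkI μ ι S x)) := by
  have hfin : bkCyl μ ι S (bkName ι x) ≠ ⊤ := measure_ne_top _ _
  unfold bkI
  rw [neg_neg, Real.exp_log (ENNReal.toReal_pos h hfin), ENNReal.ofReal_toReal hfin]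

lemma bkI_mono [IsProbabilityMeasure μ] {S S' : Finset G} (hS : S ⊆ S') {x : X}
    (h : bkCyl μ ι S' (bkName ι x) ≠ 0) : bkI μ ι S x ≤ bkI μ ι S' x := by
  unfold bkI
  have hfin : ∀ S : Finset G, bkCyl μ ι S (bkName ι x) ≠ ⊤ := fun S => measure_ne_top _ _
  refine neg_le_neg (Real.log_le_log (ENNReal.toReal_pos h (hfin _)) ?_)
  refine ENNReal.toReal_mono (hfin _) (measure_mono ?_)
  intro y hy g hg
  exact hy g (hS hg)

/-- Tail estimate. -/
lemma bkI_tail [IsProbabilityMeasure μ] (hι : Measurable ι) (S : Finset G) (B : Set X) :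
    ∫ x in B, bkI μ ι S x ∂μ ≤ S.card * Real.log k * μ.real B + 1 := by
  classical
  have hk : 0 < k := by
    rcases Nat.eq_zero_or_pos k with h | h
    · subst h
      obtain ⟨x⟩ : Nonempty X := nonempty_of_isProbabilityMeasure μ
      exact (IsEmpty.false (ι x)).elim
    · exact h
  set b : ℝ := S.card * Real.log k with hb
  have hmeasE : Measurable (fun x => Real.exp (bkI μ ι S x - b)) :=
    Real.measurable_exp.comp ((bkI_measurable μ hι S).sub_const b)
  have hintE : Integrable (fun x => Real.exp (bkI μ ι S x - b)) μ := by
    obtain ⟨M, hM0, hM⟩ := bkI_bdd μ (ι := ι) S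
    refine Integrable.of_bound hmeasE.aestronglyMeasurable (Real.exp (M - b))
      (ae_of_all _ fun x => ?_)
    rw [Real.norm_eq_abs, abs_of_pos (Real.exp_pos _)]
    exact Real.exp_le_exp.2 (by linarith [hM x])
  have hE : ∫ x, Real.exp (bkI μ ι S x - b) ∂μ ≤ 1 := by
    simp_rw [bkI_eq]
    rw [bk_integral_fin μ hι S (fun v => Real.exp (-Real.log (bkMass μ ι S v) - b))]
    calc _ ≤ ∑ v : (S → Fin k), Real.exp (-b) := by
          refine Finset.sum_le_sum fun v _ => ?_
          have h0 : 0 ≤ bkMass μ ι S v := ENNReal.toReal_nonneg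
          rcases h0.eq_or_lt with h | h
          · rw [← h]; simp [Real.exp_nonneg]
          · rw [sub_eq_add_neg, Real.exp_add, Real.exp_neg, Real.exp_log h, ← mul_assoc,
              mul_inv_cancel₀ h.ne', one_mul]
      _ = 1 := by
          rw [Finset.sum_const, Finset.card_univ]
          simp only [Fintype.card_pi, Fintype.card_fin, Finset.prod_const, Finset.card_univ,
            Fintype.card_coe, nsmul_eq_mul]
          rw [hb, Real.exp_neg, Real.exp_nat_mul, Real.exp_log (by exact_mod_cast hk)]
          push_cast
          exact mul_inv_cancel₀ (by positivity)
  calc ∫ x in B, bkI μ ι S x ∂μ ≤ ∫ x in B, (b + Real.exp (bkI μ ι S x - b)) ∂μ := by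
        refine integral_mono ((bkI_integrable μ hι S).integrableOn)
          ((integrable_const b).add hintE.integrableOn) fun x => ?_
        have := Real.add_one_le_exp (bkI μ ι S x - b)
        simp only
        linarith
    _ = b * μ.real B + ∫ x in B, Real.exp (bkI μ ι S x - b) ∂μ := by
        rw [integral_add (integrable_const b) hintE.integrableOn]
        simp [mul_comm]
    _ ≤ b * μ.real B + 1 := by
        gcongr
        refine le_trans (setIntegral_le_integral hintE (ae_of_all _ fun x => (Real.exp_pos _).le)) hE

/-- Cost of the code `bkKap`. -/
lemma bk_cost [IsProbabilityMeasure μ] [SMulInvariantMeasure G X μ] [DecidableEq G]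
    (K V : Finset G) {κ₀ : G} (hκ₀ : κ₀ ∈ K) (M : ℝ) (hM0 : 0 ≤ M)
    (hM : ∀ x, bkI μ ι K x ≤ M) (x : X)
    (hx : ∀ S : Finset G, bkCyl μ ι S (bkName ι x) ≠ 0) :
    ENNReal.ofReal (Real.exp (-(∑ v ∈ V, bkI μ ι K (κ₀⁻¹ • v • x) / K.card +
      M * ∑ κ ∈ K, ((V.filter fun v => κ₀ * κ⁻¹ * v ∉ V).card : ℝ)))) ≤
    bkKap μ ι K V (bkName ι x) := by
  have hKpos : (0 : ℝ) < K.card := by exact_mod_cast Finset.card_pos.2 ⟨_, hκ₀⟩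
  have hKge : (1 : ℝ) ≤ K.card := by exact_mod_cast Finset.card_pos.2 ⟨_, hκ₀⟩
  have h1 : bkKap μ ι K V (bkName ι x) = ENNReal.ofReal (Real.exp
      (-∑ c ∈ K⁻¹ * V, bkI μ ι ((K * {c}) ∩ V) x / K.card)) := by
    unfold bkKap
    rw [← Finset.sum_neg_distrib, Real.exp_sum, ENNReal.ofReal_prod_of_nonneg
      (fun _ _ => (Real.exp_pos _).le)]
    refine Finset.prod_congr rfl fun c _ => ?_
    rw [bkCyl_eq_exp μ (hx _), ENNReal.ofReal_rpow_of_pos (Real.exp_pos _), ← Real.exp_mul]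
    congr 2
    ring
  rw [h1]
  refine ENNReal.ofReal_le_ofReal (Real.exp_le_exp.2 (neg_le_neg ?_))
  have h2 : ∀ c, bkI μ ι ((K * {c}) ∩ V) x / K.card ≤ bkI μ ι K (c • x) / K.card := by
    intro c
    rw [← bkI_smul μ K c x]
    gcongr
    exact bkI_mono μ Finset.inter_subset_left (hx _)
  rw [← Finset.sum_filter_add_sum_filter_not (K⁻¹ * V) (fun c => κ₀ * c ∈ V)]
  refine add_le_add ?_ ?_
  · calc _ ≤ ∑ c ∈ (K⁻¹ * V).filter (fun c => κ₀ * c ∈ V), bkI μ ι K (c • x) / K.card :=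
          Finset.sum_le_sum fun c _ => h2 c
      _ = ∑ v ∈ ((K⁻¹ * V).filter (fun c => κ₀ * c ∈ V)).image (fun c => κ₀ * c),
            bkI μ ι K (κ₀⁻¹ • v • x) / K.card := by
          rw [Finset.sum_image (fun a _ b _ h => mul_left_cancel h)]
          refine Finset.sum_congr rfl fun c _ => ?_
          rw [mul_smul, inv_smul_smul]
      _ ≤ _ := by
          refine Finset.sum_le_sum_of_subset_of_nonneg ?_ ?_
          · intro v hv
            obtain ⟨c, hc, rfl⟩ := Finset.mem_image.1 hv
            exact (Finset.mem_filter.1 hc).2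
          · intro v _ _
            exact div_nonneg (bkI_nonneg μ _ _) hKpos.le
  · calc _ ≤ ∑ c ∈ (K⁻¹ * V).filter (fun c => ¬ κ₀ * c ∈ V), M := by
          refine Finset.sum_le_sum fun c _ => (h2 c).trans ?_
          refine (div_le_self (bkI_nonneg μ _ _) hKge).trans (hM _)
      _ = M * ((K⁻¹ * V).filter (fun c => ¬ κ₀ * c ∈ V)).card := by
          rw [Finset.sum_const, nsmul_eq_mul, mul_comm]
      _ ≤ _ := by
          gcongr
          have : (K⁻¹ * V).filter (fun c => ¬ κ₀ * c ∈ V) ⊆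
              K.biUnion fun κ => (V.filter fun v => κ₀ * κ⁻¹ * v ∉ V).image (fun v => κ⁻¹ * v) := by
            intro c hc
            obtain ⟨hc1, hc2⟩ := Finset.mem_filter.1 hc
            obtain ⟨κ', hκ', v, hv, rfl⟩ := Finset.mem_mul.1 hc1
            obtain ⟨κ, hκ, rfl⟩ := Finset.mem_inv.1 hκ'
            simp only [Finset.mem_biUnion, Finset.mem_image, Finset.mem_filter]
            exact ⟨κ, hκ, v, ⟨hv, by rwa [mul_assoc]⟩, rfl⟩
          calc _ ≤ ((K.biUnion fun κ => (V.filter fun v => κ₀ * κ⁻¹ * v ∉ V).image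
                (fun v => κ⁻¹ * v)).card : ℝ) := by exact_mod_cast Finset.card_le_card this
            _ ≤ ((∑ κ ∈ K, ((V.filter fun v => κ₀ * κ⁻¹ * v ∉ V).image
                (fun v => κ⁻¹ * v)).card : ℕ) : ℝ) := by exact_mod_cast Finset.card_biUnion_le
            _ ≤ _ := by
                push_cast
                refine Finset.sum_le_sum fun κ _ => ?_
                exact_mod_cast Finset.card_image_le

end BKInfo

section BKErg

lemma bk_mean_abstract [Group G] {E : Type*} [NormedAddCommGroup E] [InnerProductSpace ℝ E]
    [CompleteSpace E] (U : G → E →ₗᵢ[ℝ] E) (hU : ∀ v g f, U v (U g f) = U (g * v) f)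
    (F : ℕ → Finset G) (hF : IsFolnerSeq F) (f : E) :
    ∃ w : E, (∀ g, U g w = w) ∧ (∀ z, (∀ g, U g z = z) → inner ℝ (f - w) z = 0) ∧
      Tendsto (fun n => ((F n).card : ℝ)⁻¹ • ∑ v ∈ F n, U v (f - w)) atTop (𝓝 0) := by
  classical
  set N : Submodule ℝ E := Submodule.span ℝ (Set.range fun p : G × E => p.2 - U p.1 p.2) with hN
  set Nc := N.topologicalClosure with hNc
  have hcomplete : CompleteSpace Nc := N.isClosed_topologicalClosure.completeSpace_coe
  set P := Nc.starProjection f with hP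
  have hPmem : P ∈ Nc := Submodule.starProjection_apply_mem _ _
  have hmem : ∀ g y, y - U g y ∈ Nc := fun g y =>
    N.le_topologicalClosure (Submodule.subset_span ⟨(g, y), rfl⟩)
  have horth : f - P ∈ Ncᗮ := Submodule.sub_starProjection_mem_orthogonal f
  refine ⟨f - P, fun g => ?_, fun z hz => ?_, ?_⟩
  · have h1 : inner ℝ ((f - P) - U g (f - P)) (f - P) = 0 := horth _ (hmem g _)
    rw [← sub_eq_zero, ← norm_eq_zero]
    have h2 : ‖U g (f - P) - (f - P)‖ ^ 2 = 0 := by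
      rw [norm_sub_sq_real, (U g).norm_map]
      rw [inner_sub_left, real_inner_self_eq_norm_sq] at h1
      linarith
    exact pow_eq_zero_iff (two_ne_zero) |>.1 h2
  · have hz' : z ∈ Nᗮ := by
      rw [Submodule.mem_orthogonal]
      intro u hu
      induction hu using Submodule.span_induction with
      | mem x hx =>
        obtain ⟨⟨g, y⟩, rfl⟩ := hx
        simp only
        rw [inner_sub_left]
        conv_lhs => enter [2]; rw [← hz g]
        rw [(U g).inner_map_map, sub_self]
      | zero => simp
      | add x y _ _ hx hy => rw [inner_add_left, hx, hy, add_zero]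
      | smul a x _ hx => rw [inner_smul_left, hx, mul_zero]
    rw [← Submodule.orthogonal_closure] at hz'
    rw [_root_.sub_sub_cancel]
    exact hz' _ hPmem
  · rw [_root_.sub_sub_cancel]
    set A : ℕ → E → E := fun n y => ((F n).card : ℝ)⁻¹ • ∑ v ∈ F n, U v y with hA
    have hAnorm : ∀ n y, ‖A n y‖ ≤ ‖y‖ := by
      intro n y
      rw [hA]
      simp only
      rw [norm_smul, norm_inv, Real.norm_natCast]
      have : ‖∑ v ∈ F n, U v y‖ ≤ (F n).card * ‖y‖ := by
        refine (norm_sum_le _ _).trans ?_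
        simp
      rcases Nat.eq_zero_or_pos (F n).card with h | h
      · rw [h]; simp
      · have hpos : (0 : ℝ) < (F n).card := by exact_mod_cast h
        rw [inv_mul_le_iff₀ hpos]
        exact this
    have hAsub : ∀ n y z, A n (y + z) = A n y + A n z := by
      intro n y z
      simp [hA, Finset.sum_add_distrib]
    have hNt : ∀ y ∈ N, Tendsto (fun n => A n y) atTop (𝓝 0) := by
      intro y hy
      induction hy using Submodule.span_induction with
      | mem x hx =>
        obtain ⟨⟨g, y⟩, rfl⟩ := hx
        simp only
        have hb : ∀ n, ‖A n (y - U g y)‖ ≤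
            (((symmDiff (F n : Set G) ((g * ·) '' (F n : Set G))).ncard : ℝ) / (F n).card) * ‖y‖ := by
          intro n
          have h1 : ∑ v ∈ F n, U v (y - U g y) =
              ∑ v ∈ F n \ (F n).image (g * ·), U v y - ∑ v ∈ (F n).image (g * ·) \ F n, U v y := by
            rw [Finset.sum_sdiff_sub_sum_sdiff, Finset.sum_image (fun a _ b _ h => mul_left_cancel h)]
            simp [hU, Finset.sum_sub_distrib]
          have h2 : ‖∑ v ∈ F n, U v (y - U g y)‖ ≤
              ((symmDiff (F n : Set G) ((g * ·) '' (F n : Set G))).ncard : ℝ) * ‖y‖ := by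
            have h3 : symmDiff (F n : Set G) ((g * ·) '' (F n : Set G)) =
                (((F n \ (F n).image (g * ·)) ∪ ((F n).image (g * ·) \ F n) : Finset G) : Set G) := by
              ext a; simp [Set.mem_symmDiff]
            rw [h3, Set.ncard_coe_finset, Finset.card_union_of_disjoint
              (disjoint_sdiff_sdiff), h1]
            push_cast
            rw [add_mul]
            refine (norm_sub_le _ _).trans (add_le_add ?_ ?_)
            · refine (norm_sum_le _ _).trans ?_
              simp
            · refine (norm_sum_le _ _).trans ?_
              simp
          simp only [hA]
          rw [norm_smul, norm_inv, Real.norm_natCast, div_eq_inv_mul, mul_assoc]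
          gcongr
        refine squeeze_zero_norm hb ?_
        simpa using (hF g).mul_const ‖y‖
      | zero => simp [hA]
      | add x y _ _ hx hy =>
        simp_rw [hAsub]
        simpa using hx.add hy
      | smul a x _ hx =>
        have : ∀ n, A n (a • x) = a • A n x := by
          intro n
          simp only [hA, map_smul, ← Finset.smul_sum]
          rw [smul_comm]
        simp_rw [this]
        simpa using hx.const_smul a
    rw [Metric.tendsto_atTop]
    intro ε hε
    have : P ∈ closure (N : Set E) := by
      rw [← Submodule.topologicalClosure_coe]; exact hPmem
    obtain ⟨y, hy, hyd⟩ := Metric.mem_closure_iff.1 this (ε / 2) (by positivity)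
    obtain ⟨n₀, hn₀⟩ := Metric.tendsto_atTop.1 (hNt y hy) (ε / 2) (by positivity)
    refine ⟨n₀, fun n hn => ?_⟩
    have h1 := hn₀ n hn
    rw [dist_zero_right] at h1 ⊢
    have h2 : A n P = A n y + A n (P - y) := by rw [← hAsub]; simp
    have h3 := hAnorm n (P - y)
    rw [dist_eq_norm] at hyd
    change ‖A n P‖ < ε
    rw [h2]
    linarith [norm_add_le (A n y) (A n (P - y))]

variable [Group G] [Countable G] [MulAction G X] [MeasurableSpace X] [MeasurableConstSMul G X]
  (μ : Measure X) [IsProbabilityMeasure μ] [SMulInvariantMeasure G X μ]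

lemma bk_const [IsProbabilityMeasure μ] (herg : IsErgodicGAction G μ) (w : X → ℝ) (hw : Measurable w)
    (hinv : ∀ g : G, ∀ᵐ x ∂μ, w (g • x) = w x) : ∃ c, ∀ᵐ x ∂μ, w x = c := by
  set X0 : Set X := {x | ∀ g : G, w (g • x) = w x} with hX0
  have hX0m : MeasurableSet X0 := by
    have : X0 = ⋂ g : G, {x | w (g • x) = w x} := by ext x; simp [hX0]
    rw [this]
    exact MeasurableSet.iInter fun g =>
      measurableSet_eq_fun (hw.comp (measurable_const_smul g)) hw
  have hX0ae : ∀ᵐ x ∂μ, x ∈ X0 := ae_all_iff.2 hinv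
  have hX0inv : ∀ (g : G) x, x ∈ X0 → g • x ∈ X0 := by
    intro g x hx h
    rw [← mul_smul, hx, hx]
  obtain ⟨c, hc⟩ := Filter.exists_eventuallyEq_const_of_forall_separating (l := ae μ) (f := w)
    MeasurableSet (by
      intro s hs
      have hA := herg (X0 ∩ w ⁻¹' s) (hX0m.inter (hw hs)) (by
        intro g
        ext x
        simp only [mem_preimage, mem_inter_iff]
        constructor
        · rintro ⟨h1, h2⟩
          have h3 := hX0inv g⁻¹ _ h1
          rw [inv_smul_smul] at h3
          exact ⟨h3, by rwa [h3 g] at h2⟩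
        · rintro ⟨h1, h2⟩
          exact ⟨hX0inv g x h1, by rwa [h1 g]⟩)
      rcases hA with h | h
      · right
        have h' := measure_eq_zero_iff_ae_notMem.1 h
        filter_upwards [hX0ae, h'] with x h1 h2 h3
        exact h2 ⟨h1, h3⟩
      · left
        have h' : ∀ᵐ x ∂μ, x ∈ X0 ∩ w ⁻¹' s :=
          (mem_ae_iff_prob_eq_one (hX0m.inter (hw hs))).2 h
        filter_upwards [h'] with x h1
        exact h1.2)
  exact ⟨c, hc⟩

lemma bk_mean (herg : IsErgodicGAction G μ) (F : ℕ → Finset G) (hF : IsFolnerSeq F)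
    (ψ : X → ℝ) (hψ : Measurable ψ) (M : ℝ) (hM : ∀ x, |ψ x| ≤ M) (τ : ℝ) (hτ : 0 < τ) :
    Tendsto (fun n => μ {x | (∫ y, ψ y ∂μ + τ) * (F n).card < ∑ g ∈ F n, ψ (g • x)})
      atTop (𝓝 0) := by
  have hmp : ∀ g : G, MeasurePreserving (fun x : X => g • x) μ μ := fun g =>
    measurePreserving_smul g μ
  set U : G → (Lp ℝ 2 μ) →ₗᵢ[ℝ] (Lp ℝ 2 μ) := fun g => Lp.compMeasurePreservingₗᵢ ℝ _ (hmp g)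
    with hUdef
  have hUae : ∀ g (f : Lp ℝ 2 μ), ∀ᵐ x ∂μ, U g f x = f (g • x) := fun g f =>
    Lp.coeFn_compMeasurePreserving f (hmp g)
  have hψL : MemLp ψ 2 μ := MemLp.of_bound hψ.aestronglyMeasurable M (ae_of_all _ hM)
  obtain ⟨w, hw1, hw2, hw3⟩ := bk_mean_abstract U (by
    intro v g f
    apply Lp.ext
    filter_upwards [hUae v (U g f), hUae (g * v) f, (hmp v).quasiMeasurePreserving.ae (hUae g f)]
      with x h1 h2 h3
    rw [h1, h2, h3, mul_smul]) F hF (hψL.toLp ψ)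
  obtain ⟨c, hc⟩ := bk_const μ herg w (Lp.stronglyMeasurable w).measurable (by
    intro g
    filter_upwards [hUae g w] with x hx
    rw [← hx, hw1])
  have hcint : c = ∫ y, ψ y ∂μ := by
    have h1 := hw2 ((memLp_const (1 : ℝ)).toLp (fun _ => (1 : ℝ))) (by
      intro g
      apply Lp.ext
      have h0 := (memLp_const (1 : ℝ) (p := 2) (μ := μ)).coeFn_toLp
      filter_upwards [hUae g ((memLp_const (1 : ℝ)).toLp (fun _ => (1 : ℝ))), h0,
        (hmp g).quasiMeasurePreserving.ae h0] with x h1 h2 h3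
      rw [h1, h2, h3])
    rw [L2.inner_def] at h1
    have h2 : ∫ x, inner ℝ (((hψL.toLp ψ) - w : Lp ℝ 2 μ) x)
        (((memLp_const (1 : ℝ)).toLp (fun _ => (1 : ℝ)) : Lp ℝ 2 μ) x) ∂μ =
        ∫ x, (ψ x - c) ∂μ := by
      refine integral_congr_ae ?_
      filter_upwards [Lp.coeFn_sub (hψL.toLp ψ) w, hψL.coeFn_toLp, hc,
        (memLp_const (1 : ℝ) (p := 2) (μ := μ)).coeFn_toLp] with x h1 h2 h3 h4
      rw [h1, h4, Pi.sub_apply, h2, h3]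
      simp
    rw [h2, integral_sub (hψL.integrable (by norm_num)) (integrable_const c)] at h1
    simp at h1
    linarith
  have hw4 := tendsto_iff_norm_sub_tendsto_zero.1 hw3
  simp only [sub_zero] at hw4
  have hb : ∀ n, μ {x | (∫ y, ψ y ∂μ + τ) * (F n).card < ∑ g ∈ F n, ψ (g • x)} ≤
      ENNReal.ofReal τ⁻¹ ^ 2 * ENNReal.ofReal
        (‖((F n).card : ℝ)⁻¹ • ∑ v ∈ F n, U v ((hψL.toLp ψ) - w)‖) ^ 2 := by
    intro n
    set f : Lp ℝ 2 μ := ((F n).card : ℝ)⁻¹ • ∑ v ∈ F n, U v ((hψL.toLp ψ) - w) with hf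
    have hfx : ∀ᵐ x ∂μ, f x = ((F n).card : ℝ)⁻¹ * ∑ v ∈ F n, (ψ (v • x) - c) := by
      have h1 : ∀ᵐ x ∂μ, ∀ v : G, U v ((hψL.toLp ψ) - w) x = ψ (v • x) - c := by
        rw [ae_all_iff]
        intro v
        have h0 : ∀ᵐ x ∂μ, ((hψL.toLp ψ) - w : Lp ℝ 2 μ) x = ψ x - c := by
          filter_upwards [Lp.coeFn_sub (hψL.toLp ψ) w, hψL.coeFn_toLp, hc] with x h1 h2 h3
          rw [h1, Pi.sub_apply, h2, h3]
        filter_upwards [hUae v ((hψL.toLp ψ) - w), (hmp v).quasiMeasurePreserving.ae h0]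
          with x h1 h2
        rw [h1, h2]
      filter_upwards [h1, Lp.coeFn_smul ((F n).card : ℝ)⁻¹
          (∑ v ∈ F n, U v ((hψL.toLp ψ) - w)),
        Lp.coeFn_finsetSum (F n) (fun v => U v ((hψL.toLp ψ) - w))] with x h1 h2 h3
      rw [hf, h2, Pi.smul_apply, h3, smul_eq_mul]
      congr 1
      rw [Finset.sum_apply]
      exact Finset.sum_congr rfl fun v _ => h1 v
    have hch := meas_ge_le_mul_pow_eLpNorm_enorm (p := 2) μ (by norm_num) (by norm_num)
      (Lp.aestronglyMeasurable f) (ε := ENNReal.ofReal τ) (by simpa using hτ) (by simp)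
    have e1 : eLpNorm f 2 μ = ENNReal.ofReal ‖f‖ := by
      rw [Lp.norm_def, ENNReal.ofReal_toReal (Lp.eLpNorm_ne_top f)]
    rw [e1] at hch
    simp only [ENNReal.toReal_ofNat, ENNReal.rpow_ofNat] at hch
    rw [ENNReal.ofReal_inv_of_pos hτ]
    refine le_trans (measure_mono_ae ?_) hch
    filter_upwards [hfx] with x hx hlt
    change (∫ y, ψ y ∂μ + τ) * (F n).card < ∑ g ∈ F n, ψ (g • x) at hlt
    change ENNReal.ofReal τ ≤ ‖f x‖ₑ
    rw [hx, ← ofReal_norm]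
    refine ENNReal.ofReal_le_ofReal ((le_abs_self _).trans' ?_)
    have hpos : (0 : ℝ) < (F n).card := by
      rcases Nat.eq_zero_or_pos (F n).card with h | h
      · rw [Finset.card_eq_zero] at h; simp [h] at hlt
      · exact_mod_cast h
    rw [Finset.sum_sub_distrib, Finset.sum_const, nsmul_eq_mul, ← div_eq_inv_mul, le_div_iff₀ hpos,
      hcint]
    linarith
  refine tendsto_of_tendsto_of_tendsto_of_le_of_le tendsto_const_nhds ?_ (fun _ => bot_le) hb
  have h5 : Tendsto (fun n => ENNReal.ofReal
        (‖((F n).card : ℝ)⁻¹ • ∑ v ∈ F n, U v ((hψL.toLp ψ) - w)‖)) atTop (𝓝 0) := by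
    have := ENNReal.tendsto_ofReal hw4
    simpa using this
  have h6 := ENNReal.Tendsto.const_mul (a := ENNReal.ofReal τ⁻¹ ^ 2) (ENNReal.Tendsto.pow (n := 2) h5)
    (Or.inr (by finiteness))
  simpa using h6

end BKErg

section BKStage1

lemma bk_folner [Group G] [DecidableEq G] {F : ℕ → Finset G} (hF : IsFolnerSeq F) (g : G) :
    Tendsto (fun n => (((F n).filter fun v => g * v ∉ F n).card : ℝ) / (F n).card)
      atTop (𝓝 0) := by
  refine squeeze_zero (fun n => by positivity) (fun n => ?_) (hF g)
  gcongr
  have hfin : (symmDiff (F n : Set G) ((g * ·) '' (F n : Set G))).Finite :=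
    ((F n).finite_toSet.union ((F n).finite_toSet.image _)).subset
      (by intro a ha; rcases ha with h | h; exacts [Or.inl h.1, Or.inr h.1])
  rw [← Finset.card_image_of_injective _ (mul_right_injective g), ← Set.ncard_coe_finset]
  refine Set.ncard_le_ncard ?_ hfin
  intro a ha
  simp only [Finset.coe_image, Finset.coe_filter, mem_image, mem_ofPred_eq] at ha
  obtain ⟨v, ⟨hv1, hv2⟩, rfl⟩ := ha
  exact Or.inr ⟨⟨v, hv1, rfl⟩, hv2⟩

lemma bk_growth_log {F : ℕ → Finset G} (hG : GrowthCond F) (c : ℝ) :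
    ∀ᶠ n : ℕ in atTop, c * Real.log n ≤ (F n).card := by
  filter_upwards [hG.eventually_ge_atTop c, eventually_ge_atTop 2] with n h1 h2
  have : 0 < Real.log n := Real.log_pos (by exact_mod_cast h2)
  rwa [le_div_iff₀ this] at h1

lemma bk_growth_top {F : ℕ → Finset G} (hG : GrowthCond F) :
    Tendsto (fun n => ((F n).card : ℝ)) atTop atTop := by
  refine tendsto_atTop_mono' _ (f₁ := fun n : ℕ => 1 * Real.log n) (bk_growth_log hG 1) ?_
  simp only [one_mul]
  exact Real.tendsto_log_atTop.comp tendsto_natCast_atTop_atTop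

variable [Group G] [Countable G] [MulAction G X] [MeasurableSpace X] [MeasurableConstSMul G X]
  (μ : Measure X) [IsProbabilityMeasure μ] [SMulInvariantMeasure G X μ] {k : ℕ} {ι : X → Fin k}

/-- Boundary terms vanish. -/
lemma bk_bdry_sum [DecidableEq G] {F : ℕ → Finset G} (hF : IsFolnerSeq F) (hG : GrowthCond F)
    (K : Finset G) (M η : ℝ) (hη : 0 < η) (a : G) :
    ∀ᶠ n in atTop, M * ∑ κ ∈ K, (((F n).filter fun v => a * κ⁻¹ * v ∉ F n).card : ℝ) ≤
      η * (F n).card := by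
  have h1 : Tendsto (fun n => M * ∑ κ ∈ K,
      (((F n).filter fun v => a * κ⁻¹ * v ∉ F n).card : ℝ) / (F n).card) atTop (𝓝 0) := by
    have := (tendsto_finsetSum K (fun κ _ => bk_folner hF (a * κ⁻¹))).const_mul M
    simpa using this
  filter_upwards [h1.eventually_lt_const hη, (bk_growth_top hG).eventually_gt_atTop 0]
    with n h2 h3
  rw [← Finset.sum_div, ← mul_div_assoc, div_lt_iff₀ h3] at h2
  exact h2.le

lemma bk_integral_smul (f : X → ℝ) (g : G) :
    ∫ x, f (g • x) ∂μ = ∫ x, f x ∂μ :=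
  (measurePreserving_smul g μ).integral_comp (measurableEmbedding_const_smul g) f

lemma bk_stage1 (herg : IsErgodicGAction G μ) (hι : Measurable ι)
    (F : ℕ → Finset G) (hF : IsFolnerSeq F) (hG : GrowthCond F) (h : ℝ) (hh : 0 ≤ h)
    (H1 : ∀ η > 0, ∃ᶠ n in atTop, ∫ x, bkI μ ι (F n) x ∂μ ≤ (h + η) * (F n).card)
    (η : ℝ) (hη : 0 < η) :
    ∀ᶠ n in atTop, ∫ x, max (bkI μ ι (F n) x - h * (F n).card) 0 ∂μ ≤ η * (F n).card := by
  classical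
  have hcard := bk_growth_top hG
  obtain ⟨m, hm1, hm2⟩ := ((H1 (η / 8) (by positivity)).and_eventually
    (hcard.eventually_gt_atTop 0)).exists
  set K := F m with hK
  have hKpos : (0 : ℝ) < K.card := hm2
  have hKne : K.Nonempty := Finset.card_pos.1 (by exact_mod_cast hKpos)
  obtain ⟨κ₀, hκ₀⟩ := hKne
  obtain ⟨M, hM0, hM⟩ := bkI_bdd μ (ι := ι) K
  set ψ : X → ℝ := fun x => bkI μ ι K (κ₀⁻¹ • x) / K.card with hψ
  have hψm : Measurable ψ :=
    ((bkI_measurable μ hι K).comp (measurable_const_smul κ₀⁻¹)).div_const _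
  have hψint : ∫ x, ψ x ∂μ ≤ h + η / 8 := by
    rw [hψ, integral_div, bk_integral_smul μ (bkI μ ι K), div_le_iff₀ hKpos]
    exact hm1
  set s : ℕ → ℝ≥0∞ := fun n => ENNReal.ofReal (Real.exp (-(η / 8 * (F n).card))) with hs
  have hs0 : Tendsto s atTop (𝓝 0) := by
    have : Tendsto (fun n => Real.exp (-(η / 8 * (F n).card))) atTop (𝓝 0) :=
      Real.tendsto_exp_neg_atTop_nhds_zero.comp (hcard.const_mul_atTop (by positivity))
    simpa using ENNReal.tendsto_ofReal this
  have hmean := bk_mean μ herg F hF ψ hψm (M / K.card) (by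
    intro x
    rw [abs_of_nonneg (div_nonneg (bkI_nonneg μ _ _) hKpos.le)]
    exact div_le_div_of_nonneg_right (hM _) hKpos.le) (η / 8) (by positivity)
  set B : ℕ → Set X := fun n => {x | (h + η / 2) * (F n).card < bkI μ ι (F n) x} with hB
  have hBm : ∀ n, MeasurableSet (B n) := fun n =>
    measurableSet_lt measurable_const (bkI_measurable μ hι _)
  have hBb : ∀ᶠ n in atTop, μ (B n) ≤
      μ {x | (∫ y, ψ y ∂μ + η / 8) * (F n).card < ∑ g ∈ F n, ψ (g • x)} + s n := by
    filter_upwards [bk_bdry_sum hF hG K M (η / 8) (by positivity) κ₀] with n hn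
    refine le_trans ?_ (add_le_add le_rfl
      (bk_code μ hι K (F n) (F n) ⟨κ₀, hκ₀⟩ (Finset.Subset.refl _) (fun g => ι (g • Classical.choice
        (nonempty_of_isProbabilityMeasure μ))) (s n)))
    refine le_trans (measure_mono_ae ?_) (measure_union_le _ _)
    filter_upwards [bkI_pos_ae μ (ι := ι) (G := G)] with x hx hxB
    change (h + η / 2) * (F n).card < bkI μ ι (F n) x at hxB
    by_contra hcon
    change ¬ (x ∈ (_ ∪ _ : Set X)) at hcon
    rw [Set.mem_union, not_or] at hcon
    obtain ⟨hc1, hc2⟩ := hcon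
    simp only [mem_ofPred_eq, not_lt] at hc1
    apply hc2
    refine ⟨by simp, ?_⟩
    have hcost := bk_cost μ K (F n) hκ₀ M hM0 hM x hx
    change bkCyl μ ι (F n) (bkName ι x) ≤ s n * bkKap μ ι K (F n) (bkName ι x)
    refine le_trans ?_ (mul_le_mul_right hcost (s n))
    rw [bkCyl_eq_exp μ (hx _), hs, ← ENNReal.ofReal_mul (Real.exp_pos _).le, ← Real.exp_add]
    refine ENNReal.ofReal_le_ofReal (Real.exp_le_exp.2 ?_)
    have h3 : ∑ v ∈ F n, bkI μ ι K (κ₀⁻¹ • v • x) / K.card ≤ (h + η / 8 + η / 8) * (F n).card := by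
      refine hc1.trans ?_
      gcongr
    nlinarith
  have hB0 : Tendsto (fun n => μ.real (B n)) atTop (𝓝 0) := by
    have h1 : Tendsto (fun n => μ (B n)) atTop (𝓝 0) := by
      refine tendsto_of_tendsto_of_tendsto_of_le_of_le' tendsto_const_nhds ?_
        (Eventually.of_forall fun _ => bot_le) hBb
      simpa using hmean.add hs0
    have := (ENNReal.tendsto_toReal ENNReal.zero_ne_top).comp h1
    rw [ENNReal.toReal_zero] at this
    exact this
  have hB1 : ∀ᶠ n in atTop, Real.log k * μ.real (B n) < η / 4 := by
    have := hB0.const_mul (Real.log k)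
    rw [mul_zero] at this
    exact this.eventually_lt_const (by positivity)
  filter_upwards [hB1, (hcard.const_mul_atTop (show (0 : ℝ) < η / 4 by positivity)).eventually_ge_atTop 1]
    with n hn1 hn2
  have hint := bkI_integrable μ hι (F n)
  calc ∫ x, max (bkI μ ι (F n) x - h * (F n).card) 0 ∂μ
      ≤ ∫ x, (η / 2 * (F n).card + (B n).indicator (bkI μ ι (F n)) x) ∂μ := by
        refine integral_mono ((hint.sub (integrable_const _)).sup (integrable_const 0))
          ((integrable_const _).add (hint.indicator (hBm n))) fun x => ?_
        simp only
        have hc : (0 : ℝ) ≤ (F n).card := by positivity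
        by_cases hx : x ∈ B n
        · rw [Set.indicator_of_mem hx]
          have := bkI_nonneg μ (ι := ι) (F n) x
          refine max_le ?_ (by positivity)
          nlinarith [mul_nonneg hh hc]
        · rw [Set.indicator_of_notMem hx]
          have hx' : bkI μ ι (F n) x ≤ (h + η / 2) * (F n).card := not_lt.1 hx
          refine max_le ?_ (by positivity)
          nlinarith
    _ = η / 2 * (F n).card + ∫ x in B n, bkI μ ι (F n) x ∂μ := by
        rw [integral_add (integrable_const _) (hint.indicator (hBm n)), integral_indicator (hBm n)]
        simp
    _ ≤ η / 2 * (F n).card + ((F n).card * Real.log k * μ.real (B n) + 1) := by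
        gcongr
        exact bkI_tail μ hι (F n) (B n)
    _ ≤ η * (F n).card := by
        have hc : (0 : ℝ) ≤ (F n).card := by positivity
        nlinarith

end BKStage1

section BKCover

variable [Group G] [DecidableEq G]

lemma bk_mulsing (F : Finset G) (c : G) : F * {c} = F.image fun x => x * c := by
  ext g; simp only [Finset.mem_mul, Finset.mem_singleton, exists_eq_left, Finset.mem_image]

/-- One scale of the greedy covering. -/
lemma bk_cover_step (F A : Finset G) (hF : F.Nonempty) (θ : ℝ) (h1 : θ ≤ 1) :
    ∃ S ⊆ A, (1 - θ) * (S.card * F.card) ≤ ((S.biUnion fun c => F * {c}).card : ℝ) ∧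
      θ * A.card ≤ ((S.biUnion fun c => F * {c}).card : ℝ) := by
  have hcardc : ∀ c : G, (F * {c}).card = F.card := fun c => by
    rw [bk_mulsing, Finset.card_image_of_injective _ (mul_left_injective c)]
  set Ad := A.powerset.filter fun S =>
    (1 - θ) * (S.card * F.card) ≤ ((S.biUnion fun c => F * {c}).card : ℝ) with hAd
  have hne : Ad.Nonempty := ⟨∅, by simp [hAd]⟩
  obtain ⟨S, hS, hmax⟩ := Finset.exists_max_image Ad (fun S => S.card) hne
  rw [hAd, Finset.mem_filter, Finset.mem_powerset] at hS
  refine ⟨S, hS.1, hS.2, ?_⟩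
  set W := S.biUnion fun c => F * {c} with hW
  have hFpos : (0 : ℝ) < F.card := by exact_mod_cast hF.card_pos
  have hkey : ∀ c ∈ A, θ * F.card ≤ (((F * {c}) ∩ W).card : ℝ) := by
    intro c hc
    by_contra hlt
    rw [not_le] at hlt
    have hcS : c ∉ S := by
      intro hcS
      have : (F * {c}) ∩ W = F * {c} :=
        Finset.inter_eq_left.2 (fun g hg => Finset.mem_biUnion.2 ⟨c, hcS, hg⟩)
      rw [this, hcardc] at hlt
      exact absurd (mul_le_mul_of_nonneg_right h1 hFpos.le) (by rw [one_mul]; exact not_le.2 hlt)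
    have hins : insert c S ∈ Ad := by
      rw [hAd, Finset.mem_filter, Finset.mem_powerset]
      refine ⟨Finset.insert_subset hc hS.1, ?_⟩
      rw [Finset.biUnion_insert, Finset.card_insert_of_notMem hcS]
      have h3 := Finset.card_union_add_card_inter (F * {c}) W
      rw [hcardc] at h3
      have h4 : (((F * {c}) ∪ W).card : ℝ) + (((F * {c}) ∩ W).card : ℝ) = F.card + W.card := by
        exact_mod_cast h3
      have h5 := hS.2
      push_cast
      nlinarith
    have := hmax _ hins
    rw [Finset.card_insert_of_notMem hcS] at this
    omega
  have hdc : ∑ c ∈ A, ((F * {c}) ∩ W).card ≤ W.card * F.card := by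
    have e : ∀ c ∈ A, ((F * {c}) ∩ W).card = ∑ w ∈ W, if w ∈ F * {c} then 1 else 0 := by
      intro c _
      rw [Finset.sum_boole, Finset.filter_mem_eq_inter, Finset.inter_comm]
      simp
    rw [Finset.sum_congr rfl e, Finset.sum_comm, ← smul_eq_mul, ← Finset.sum_const]
    refine Finset.sum_le_sum fun w _ => ?_
    rw [Finset.sum_boole, Nat.cast_id]
    refine Finset.card_le_card_of_injOn (fun c => w * c⁻¹) ?_ ?_
    · intro c hc
      simp only [Finset.coe_filter, mem_ofPred_eq, bk_mulsing, Finset.mem_image] at hc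
      obtain ⟨_, f, hf, rfl⟩ := hc
      simpa using hf
    · intro c _ c' _ hcc
      simpa using hcc
  have h6 : (A.card : ℝ) * (θ * F.card) ≤ W.card * F.card := by
    calc (A.card : ℝ) * (θ * F.card) = ∑ c ∈ A, θ * (F.card : ℝ) := by simp
      _ ≤ ∑ c ∈ A, (((F * {c}) ∩ W).card : ℝ) := Finset.sum_le_sum hkey
      _ ≤ _ := by exact_mod_cast hdc
  have : (θ * A.card) * F.card ≤ W.card * F.card := by linarith
  exact le_of_mul_le_mul_right this hFpos

/-- The tempered set. -/
def bkT (F : ℕ → Finset G) (n : ℕ) : Finset G :=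
  (Finset.range n).biUnion fun k => (F k)⁻¹ * F n

lemma bkT_card {F : ℕ → Finset G} {C : ℝ} (hC : ∀ n : ℕ,
    ((⋃ k ∈ Finset.range n, ((F k : Set G)⁻¹ * (F n : Set G))).ncard : ℝ) ≤ C * (F n).card)
    (n : ℕ) : ((bkT F n).card : ℝ) ≤ C * (F n).card := by
  refine le_trans (le_of_eq ?_) (hC n)
  rw [← Set.ncard_coe_finset, bkT]
  congr 2
  simp

/-- The union of a selection. -/
def bkU (F : ℕ → Finset G) (sel : Finset (G × ℕ)) : Finset G :=
  sel.biUnion fun p => F p.2 * {p.1}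

lemma bk_cover_aux (F : ℕ → Finset G) (A : ℕ → Finset G) (b : ℕ) (θ : ℝ) (h0 : 0 ≤ θ)
    (h1 : θ ≤ 1) (d : ℕ) : ∀ a, a + d = b → (∀ n, a ≤ n → (F n).Nonempty) →
    ∃ sel : Finset (G × ℕ), (∀ p ∈ sel, p.2 ∈ Finset.Ico a b ∧ p.1 ∈ A p.2) ∧
      (1 - θ) * ∑ p ∈ sel, ((F p.2).card : ℝ) ≤ (bkU F sel).card ∧
      θ * ((((Finset.Ico a b).biUnion A) \ (bkU (bkT F) sel)).card : ℝ) ≤ (bkU F sel).card := by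
  induction d with
  | zero =>
    intro a ha _
    have : a = b := by omega
    subst this
    exact ⟨∅, by simp, by simp, by simp⟩
  | succ d ih =>
    intro a ha hne
    obtain ⟨sel, hsel, hs1, hs2⟩ := ih (a + 1) (by omega) (fun n hn => hne n (by omega))
    obtain ⟨S, hSA, hS1, hS2⟩ := bk_cover_step (F a) (A a \ bkU (bkT F) sel) (hne a le_rfl) θ h1
    set sel' := sel ∪ S.image fun c => (c, a) with hsel'
    have hUeq : bkU F sel' = bkU F sel ∪ S.biUnion fun c => F a * {c} := by
      rw [hsel', bkU, bkU, Finset.union_biUnion, Finset.image_biUnion]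
    have hdisj : Disjoint (bkU F sel) (S.biUnion fun c => F a * {c}) := by
      rw [Finset.disjoint_left]
      intro g hg1 hg2
      simp only [bkU, Finset.mem_biUnion, bk_mulsing, Finset.mem_image] at hg1 hg2
      obtain ⟨p, hp, f', hf', rfl⟩ := hg1
      obtain ⟨c, hc, f, hf, hfc⟩ := hg2
      have hcn := (Finset.mem_sdiff.1 (hSA hc)).2
      apply hcn
      simp only [bkU, Finset.mem_biUnion, bk_mulsing, Finset.mem_image]
      refine ⟨p, hp, f⁻¹ * f', ?_, ?_⟩
      · have := (Finset.mem_Ico.1 (hsel p hp).1).1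
        simp only [bkT, Finset.mem_biUnion, Finset.mem_range]
        exact ⟨a, by omega, Finset.mul_mem_mul (Finset.inv_mem_inv hf) hf'⟩
      · rw [mul_assoc, ← hfc]; simp
    have hdisj2 : Disjoint sel (S.image fun c => (c, a)) := by
      rw [Finset.disjoint_left]
      intro p hp hp2
      obtain ⟨c, _, rfl⟩ := Finset.mem_image.1 hp2
      have := (Finset.mem_Ico.1 (hsel _ hp).1).1
      simp at this
    have hUcard : ((bkU F sel').card : ℝ) =
        (bkU F sel).card + ((S.biUnion fun c => F a * {c}).card : ℝ) := by
      rw [hUeq, Finset.card_union_of_disjoint hdisj]; push_cast; rfl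
    refine ⟨sel', ?_, ?_, ?_⟩
    · intro p hp
      rcases Finset.mem_union.1 hp with h | h
      · have := hsel p h
        rw [Finset.mem_Ico] at this ⊢
        exact ⟨⟨by omega, this.1.2⟩, this.2⟩
      · obtain ⟨c, hc, rfl⟩ := Finset.mem_image.1 h
        exact ⟨Finset.mem_Ico.2 ⟨le_rfl, by simp; omega⟩, (Finset.mem_sdiff.1 (hSA hc)).1⟩
    · rw [hUcard, hsel', Finset.sum_union hdisj2, Finset.sum_image (by intro x _ y _ h; simpa using h)]
      simp only [Finset.sum_const, nsmul_eq_mul]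
      linarith
    · rw [hUcard]
      have hsub : ((Finset.Ico a b).biUnion A) \ (bkU (bkT F) sel') ⊆
          (((Finset.Ico (a + 1) b).biUnion A) \ (bkU (bkT F) sel)) ∪
            (A a \ bkU (bkT F) sel) := by
        intro c hc
        rw [Finset.mem_sdiff, Finset.mem_biUnion] at hc
        obtain ⟨⟨n, hn, hcn⟩, hc2⟩ := hc
        have hc3 : c ∉ bkU (bkT F) sel := fun h => hc2 (by
          rw [hsel', bkU, Finset.union_biUnion]
          exact Finset.mem_union_left _ h)
        rw [Finset.mem_union, Finset.mem_sdiff, Finset.mem_sdiff]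
        rw [Finset.mem_Ico] at hn
        rcases Nat.eq_or_lt_of_le hn.1 with h | h
        · subst h; exact Or.inr ⟨hcn, hc3⟩
        · exact Or.inl ⟨Finset.mem_biUnion.2 ⟨n, Finset.mem_Ico.2 ⟨h, hn.2⟩, hcn⟩, hc3⟩
      have h3 := (Finset.card_le_card hsub).trans (Finset.card_union_le _ _)
      have h4 : ((((Finset.Ico a b).biUnion A) \ (bkU (bkT F) sel')).card : ℝ) ≤
          ((((Finset.Ico (a + 1) b).biUnion A) \ (bkU (bkT F) sel)).card : ℝ) +
            ((A a \ bkU (bkT F) sel).card : ℝ) := by exact_mod_cast h3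
      have := mul_le_mul_of_nonneg_left h4 h0
      linarith

/-- The covering lemma. -/
lemma bk_cover (F : ℕ → Finset G) (A : ℕ → Finset G) (a b : ℕ) (hab : a ≤ b) (θ C : ℝ)
    (h0 : 0 < θ) (h1 : θ < 1) (hC0 : 0 ≤ C) (hC : ∀ n, ((bkT F n).card : ℝ) ≤ C * (F n).card)
    (hne : ∀ n, a ≤ n → (F n).Nonempty) :
    ∃ sel : Finset (G × ℕ), (∀ p ∈ sel, p.2 ∈ Finset.Ico a b ∧ p.1 ∈ A p.2) ∧
      (1 - θ) * ∑ p ∈ sel, ((F p.2).card : ℝ) ≤ (bkU F sel).card ∧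
      (((Finset.Ico a b).biUnion A).card : ℝ) ≤ (1 / θ + C / (1 - θ)) * (bkU F sel).card := by
  obtain ⟨sel, h2, h3, h4⟩ := bk_cover_aux F A b θ h0.le h1.le (b - a) a (by omega) hne
  refine ⟨sel, h2, h3, ?_⟩
  have h5 : ((bkU (bkT F) sel).card : ℝ) ≤ C * ∑ p ∈ sel, ((F p.2).card : ℝ) := by
    have : (bkU (bkT F) sel).card ≤ ∑ p ∈ sel, (bkT F p.2).card := by
      refine Finset.card_biUnion_le.trans (Finset.sum_le_sum fun p _ => ?_)
      rw [bk_mulsing]; exact Finset.card_image_le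
    calc ((bkU (bkT F) sel).card : ℝ) ≤ ∑ p ∈ sel, ((bkT F p.2).card : ℝ) := by exact_mod_cast this
      _ ≤ ∑ p ∈ sel, C * ((F p.2).card : ℝ) := Finset.sum_le_sum fun p _ => hC _
      _ = _ := by rw [Finset.mul_sum]
  have h6 := Finset.card_le_card_sdiff_add_card (t := bkU (bkT F) sel) (s := (Finset.Ico a b).biUnion A)
  have h7 : (((Finset.Ico a b).biUnion A).card : ℝ) ≤
    ((((Finset.Ico a b).biUnion A) \ (bkU (bkT F) sel)).card : ℝ) + (bkU (bkT F) sel).card := by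
    exact_mod_cast h6
  have h1' : 0 < 1 - θ := by linarith
  have h8 : ((((Finset.Ico a b).biUnion A) \ (bkU (bkT F) sel)).card : ℝ) ≤
      (1 / θ) * (bkU F sel).card := by
    rw [one_div, ← div_eq_inv_mul, le_div_iff₀ h0]; linarith
  have h9 : ∑ p ∈ sel, ((F p.2).card : ℝ) ≤ (bkU F sel).card / (1 - θ) := by
    rw [le_div_iff₀ h1']; linarith
  calc _ ≤ _ := h7
    _ ≤ (1 / θ) * (bkU F sel).card + C * ((bkU F sel).card / (1 - θ)) :=
      add_le_add h8 (h5.trans (mul_le_mul_of_nonneg_left h9 hC0))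
    _ = _ := by ring

end BKCover

section BKBowen

variable [Group G] [MetricSpace X] [CompactSpace X] [MulAction G X] [ContinuousConstSMul G X]
  [MeasurableSpace X] [BorelSpace X]

lemma bk_ball_open (S : Finset G) (x : X) (δ : ℝ) : IsOpen (bowenBall S x δ) := by
  have : bowenBall S x δ = ⋂ g ∈ S, {y : X | dist (g • x) (g • y) < δ} := by
    ext y; simp [bowenBall]
  rw [this]
  exact isOpen_biInter_finset fun g _ =>
    isOpen_lt (continuous_const.dist (continuous_const_smul g)) continuous_const |>.preimage
      continuous_id

lemma bk_ball_meas (μ : Measure X) [IsProbabilityMeasure μ] (S : Finset G) (δ : ℝ) :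
    Measurable fun x => μ (bowenBall S x δ) := by
  have hop : IsOpen {p : X × X | ∀ g ∈ S, dist (g • p.1) (g • p.2) < δ} := by
    have : {p : X × X | ∀ g ∈ S, dist (g • p.1) (g • p.2) < δ} =
        ⋂ g ∈ S, {p : X × X | dist (g • p.1) (g • p.2) < δ} := by
      ext y; simp
    rw [this]
    refine isOpen_biInter_finset fun g _ => isOpen_lt ?_ continuous_const
    exact ((continuous_const_smul g).comp continuous_fst).dist
      ((continuous_const_smul g).comp continuous_snd)
  exact measurable_measure_prodMk_left (ν := μ) hop.measurableSet

lemma bk_sep (μ : Measure X) [IsProbabilityMeasure μ] (S : Finset G) (h' δ : ℝ) (hδ : 0 < δ) :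
    ∃ Z : Finset X, (Z.card : ℝ) ≤ Real.exp (h' * S.card) ∧
      ∀ y, ENNReal.ofReal (Real.exp (-(h' * S.card))) ≤ μ (bowenBall S y δ) →
        ∃ z ∈ Z, ∀ f ∈ S, dist (f • y) (f • z) < 2 * δ := by
  classical
  set P : Finset X → Prop := fun Z =>
    (∀ z ∈ Z, ENNReal.ofReal (Real.exp (-(h' * S.card))) ≤ μ (bowenBall S z δ)) ∧
    (Z : Set X).PairwiseDisjoint (fun z => bowenBall S z δ) with hP
  have hbd : ∀ Z, P Z → (Z.card : ℝ) ≤ Real.exp (h' * S.card) := by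
    intro Z hZ
    have h1 : (Z.card : ℝ≥0∞) * ENNReal.ofReal (Real.exp (-(h' * S.card))) ≤ 1 := by
      calc (Z.card : ℝ≥0∞) * ENNReal.ofReal (Real.exp (-(h' * S.card)))
          = ∑ z ∈ Z, ENNReal.ofReal (Real.exp (-(h' * S.card))) := by simp
        _ ≤ ∑ z ∈ Z, μ (bowenBall S z δ) := Finset.sum_le_sum hZ.1
        _ = μ (⋃ z ∈ Z, bowenBall S z δ) :=
          (measure_biUnion_finset hZ.2 fun z _ => (bk_ball_open S z δ).measurableSet).symm
        _ ≤ 1 := prob_le_one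
    rw [← ENNReal.ofReal_natCast, ← ENNReal.ofReal_mul (by positivity), ENNReal.ofReal_le_one,
      Real.exp_neg, ← div_eq_mul_inv, div_le_one (Real.exp_pos _)] at h1
    exact h1
  set N : Set ℕ := {n | ∃ Z, P Z ∧ Z.card = n} with hN
  have hNne : N.Nonempty := ⟨0, ∅, ⟨by simp, by simp⟩, by simp⟩
  have hNb : BddAbove N := by
    refine ⟨⌈Real.exp (h' * S.card)⌉₊, ?_⟩
    rintro n ⟨Z, hZ, rfl⟩
    exact_mod_cast (hbd Z hZ).trans (Nat.le_ceil _)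
  obtain ⟨Z, hZ, hZc⟩ := Nat.sSup_mem hNne hNb
  refine ⟨Z, hbd Z hZ, fun y hy => ?_⟩
  by_cases hyZ : y ∈ Z
  · exact ⟨y, hyZ, fun f _ => by simp; exact hδ⟩
  by_contra hcon
  push Not at hcon
  have hins : P (insert y Z) := by
    refine ⟨?_, ?_⟩
    · intro z hz
      rcases Finset.mem_insert.1 hz with rfl | hz
      exacts [hy, hZ.1 z hz]
    · rw [Finset.coe_insert, Set.pairwiseDisjoint_insert]
      refine ⟨hZ.2, fun z hz _ => ?_⟩
      rw [Set.disjoint_left]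
      intro w hw1 hw2
      obtain ⟨f, hf, hd⟩ := hcon z hz
      have h1 : dist (f • y) (f • w) < δ := hw1 f hf
      have h2 : dist (f • z) (f • w) < δ := hw2 f hf
      have := dist_triangle_right (f • y) (f • z) (f • w)
      linarith
  have : (insert y Z).card ≤ sSup N := le_csSup hNb ⟨_, hins, rfl⟩
  rw [Finset.card_insert_of_notMem hyZ] at this
  omega

lemma bk_bowen (μ : Measure X) [IsProbabilityMeasure μ] {k : ℕ} {ι : X → Fin k}
    (hι : Measurable ι) (h' b : ℝ) (hb : 0 < b) :
    ∃ bad : Set X, MeasurableSet bad ∧ μ.real bad ≤ b ∧ ∃ δ : ℝ, 0 < δ ∧ ∃ pr : X → Fin k,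
      ∀ S : Finset G, ∃ Z : Finset X, (Z.card : ℝ) ≤ Real.exp (h' * S.card) ∧
      ∀ y, ENNReal.ofReal (Real.exp (-(h' * S.card))) ≤ μ (bowenBall S y δ) →
        ∃ z ∈ Z, ∀ f ∈ S, f • y ∉ bad → ι (f • y) = pr (f • z) := by
  classical
  obtain ⟨x₀⟩ := nonempty_of_isProbabilityMeasure μ
  have hk : 0 < k := (ι x₀).pos
  have hεpos : (0 : ℝ) < b / k := by positivity
  have hms : ∀ i, MeasurableSet (ι ⁻¹' {i}) := fun i => hι (measurableSet_singleton i)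
  choose Cc hCsub hCc hCm using fun i : Fin k =>
    (hms i).exists_isCompact_diff_lt (measure_ne_top μ _)
      (ENNReal.ofReal_pos.2 hεpos).ne'
  have hev : ∀ᶠ δ : ℝ in 𝓝[>] 0, ∀ i j, i ≠ j →
      Disjoint (Metric.thickening (2 * δ) (Cc i)) (Metric.thickening (2 * δ) (Cc j)) := by
    rw [eventually_all]; intro i
    rw [eventually_all]; intro j
    by_cases hij : i = j
    · exact Eventually.of_forall fun δ h => absurd hij h
    have hd : Disjoint (Cc i) (Cc j) := by
      rw [Set.disjoint_left]
      intro x hx1 hx2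
      exact hij ((hCsub i hx1).symm.trans (hCsub j hx2))
    obtain ⟨d, hd0, hd1⟩ := hd.exists_thickenings (hCc i) (hCc j).isClosed
    have : ∀ᶠ δ : ℝ in 𝓝[>] 0, δ < d / 2 :=
      (eventually_lt_nhds (by positivity)).filter_mono nhdsWithin_le_nhds
    filter_upwards [this] with δ hδ _
    exact hd1.mono (Metric.thickening_mono (by linarith) _) (Metric.thickening_mono (by linarith) _)
  obtain ⟨δ, hδ1, hδ0⟩ := (hev.and self_mem_nhdsWithin).exists
  have hδ0 : 0 < δ := hδ0
  refine ⟨⋃ i, (ι ⁻¹' {i} \ Cc i), MeasurableSet.iUnion fun i =>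
    (hms i).diff (hCc i).measurableSet, ?_, δ, hδ0,
    fun p => if h : ∃ i, p ∈ Metric.thickening (2 * δ) (Cc i) then h.choose else ι x₀, ?_⟩
  · refine ENNReal.toReal_le_of_le_ofReal hb.le ?_
    calc μ (⋃ i, (ι ⁻¹' {i} \ Cc i)) ≤ ∑ i, μ (ι ⁻¹' {i} \ Cc i) := measure_iUnion_fintype_le _ _
      _ ≤ ∑ i : Fin k, ENNReal.ofReal (b / k) := Finset.sum_le_sum fun i _ => (hCm i).le
      _ = ENNReal.ofReal b := by
        rw [← ENNReal.ofReal_sum_of_nonneg (fun _ _ => hεpos.le)]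
        congr 1
        simp only [Finset.sum_const, Finset.card_univ, Fintype.card_fin, nsmul_eq_mul]
        field_simp
  · intro S
    obtain ⟨Z, hZ1, hZ2⟩ := bk_sep μ S h' δ hδ0
    refine ⟨Z, hZ1, fun y hy => ?_⟩
    obtain ⟨z, hz, hz2⟩ := hZ2 y hy
    refine ⟨z, hz, fun f hf hbad => ?_⟩
    have h1 : f • y ∈ Cc (ι (f • y)) := by
      by_contra hc
      exact hbad (Set.mem_iUnion.2 ⟨_, rfl, hc⟩)
    have h2 : f • z ∈ Metric.thickening (2 * δ) (Cc (ι (f • y))) :=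
      Metric.mem_thickening_iff.2 ⟨_, h1, by rw [dist_comm]; exact hz2 f hf⟩
    have hex : ∃ i, f • z ∈ Metric.thickening (2 * δ) (Cc i) := ⟨_, h2⟩
    simp only
    rw [dif_pos hex]
    by_contra hne
    exact Set.disjoint_left.1 (hδ1 _ _ hne) h2 hex.choose_spec

end BKBowen

section BKStage2

/-- General boundary estimate. -/
lemma bk_bdry_gen [Group G] [DecidableEq G] {F : ℕ → Finset G} (hF : IsFolnerSeq F)
    (hG : GrowthCond F) {α : Type*} (K : Finset α) (φ : α → G) (M η : ℝ) (hη : 0 < η) :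
    ∀ᶠ n in atTop, M * ∑ κ ∈ K, (((F n).filter fun v => φ κ * v ∉ F n).card : ℝ) ≤
      η * (F n).card := by
  have h1 : Tendsto (fun n => M * ∑ κ ∈ K,
      (((F n).filter fun v => φ κ * v ∉ F n).card : ℝ) / (F n).card) atTop (𝓝 0) := by
    have := (tendsto_finsetSum K (fun κ _ => bk_folner hF (φ κ))).const_mul M
    simpa using this
  filter_upwards [h1.eventually_lt_const hη, (bk_growth_top hG).eventually_gt_atTop 0]
    with n h2 h3
  rw [← Finset.sum_div, ← mul_div_assoc, div_lt_iff₀ h3] at h2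
  exact h2.le

/-- Boundary of the complement of a union of translates. -/
lemma bk_bdry_V [Group G] [DecidableEq G] (F : ℕ → Finset G) (FN : Finset G)
    (sel : Finset (G × ℕ)) (g : G) :
    ((FN \ bkU F sel).filter fun v => g * v ∉ FN \ bkU F sel).card ≤
      (FN.filter fun v => g * v ∉ FN).card +
        ∑ p ∈ sel, ((F p.2).filter fun f => g⁻¹ * f ∉ F p.2).card := by
  have hsub : ((FN \ bkU F sel).filter fun v => g * v ∉ FN \ bkU F sel) ⊆
      (FN.filter fun v => g * v ∉ FN) ∪
        sel.biUnion fun p => ((F p.2).filter fun f => g⁻¹ * f ∉ F p.2).image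
          fun f => g⁻¹ * (f * p.1) := by
    intro v hv
    rw [Finset.mem_filter, Finset.mem_sdiff, Finset.mem_sdiff] at hv
    obtain ⟨⟨hv1, hv2⟩, hv3⟩ := hv
    rw [Finset.mem_union, Finset.mem_filter]
    by_cases hgv : g * v ∈ FN
    · right
      have hgU : g * v ∈ bkU F sel := by
        by_contra hc; exact hv3 ⟨hgv, hc⟩
      simp only [bkU, Finset.mem_biUnion, bk_mulsing, Finset.mem_image] at hgU hv2 ⊢
      obtain ⟨p, hp, f, hf, hfg⟩ := hgU
      refine ⟨p, hp, f, Finset.mem_filter.2 ⟨hf, fun hc => hv2 ⟨p, hp, g⁻¹ * f, hc, ?_⟩⟩, ?_⟩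
      · rw [mul_assoc, hfg]; simp
      · rw [hfg]; simp
    · exact Or.inl ⟨hv1, hgv⟩
  refine (Finset.card_le_card hsub).trans ((Finset.card_union_le _ _).trans ?_)
  gcongr
  refine Finset.card_biUnion_le.trans (Finset.sum_le_sum fun p _ => Finset.card_image_le)

lemma bk_weight {α β : Type*} (Ω : Finset α) (w : α → ℝ) (hw : ∀ q ∈ Ω, 0 ≤ w q)
    (Ω' : Finset β) (a : ℝ) (ha : 0 ≤ a) :
    ∑ D ∈ Ω.powerset ×ˢ Ω'.powerset, (∏ q ∈ D.1, w q) * a ^ D.2.card ≤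
      Real.exp (∑ q ∈ Ω, w q + a * Ω'.card) := by
  rw [Finset.sum_product]
  simp only []
  rw [← Finset.sum_mul_sum, ← Finset.prod_one_add, Real.exp_add]
  have h2 : ∑ t ∈ Ω'.powerset, a ^ t.card = ∏ q ∈ Ω', (1 + a) := by
    rw [Finset.prod_one_add]; simp
  rw [h2]
  refine mul_le_mul ?_ ?_ (Finset.prod_nonneg fun _ _ => by positivity) (Real.exp_pos _).le
  · rw [Real.exp_sum]
    refine Finset.prod_le_prod (fun q hq => by have := hw q hq; positivity) fun q _ => ?_
    linarith [Real.add_one_le_exp (w q)]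
  · rw [Finset.prod_const, mul_comm a, Real.exp_nat_mul]
    refine pow_le_pow_left₀ (by positivity) ?_ _
    linarith [Real.add_one_le_exp a]

section Prob

variable [Group G] [MulAction G X] [MeasurableSpace X] [MeasurableConstSMul G X]
  (μ : Measure X) [IsProbabilityMeasure μ] [SMulInvariantMeasure G X μ] {k : ℕ} {ι : X → Fin k}

lemma bk_union [DecidableEq G] (hι : Measurable ι) (K FN : Finset G) (hK : K.Nonempty)
    {α : Type*} (𝒟 : Finset α) (V : α → Finset G) (hV : ∀ D, V D ⊆ FN) (u : α → G → Fin k)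
    (W : α → ℝ) (hW : ∀ D ∈ 𝒟, 0 ≤ W D) (Q r : ℝ) (hr : 0 ≤ r) (hQ : r * ∑ D ∈ 𝒟, W D ≤ Q) :
    μ {x | ∃ D ∈ 𝒟, (∀ g ∈ FN \ V D, ι (g • x) = u D g) ∧
      bkCyl μ ι FN (bkName ι x) ≤ ENNReal.ofReal (r * W D) * bkKap μ ι K (V D) (bkName ι x)} ≤
      ENNReal.ofReal Q := by
  calc _ ≤ μ (⋃ D ∈ 𝒟, {x | (∀ g ∈ FN \ V D, ι (g • x) = u D g) ∧
      bkCyl μ ι FN (bkName ι x) ≤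
        ENNReal.ofReal (r * W D) * bkKap μ ι K (V D) (bkName ι x)}) := by
        refine measure_mono ?_
        rintro x ⟨D, hD, h⟩
        exact Set.mem_biUnion hD h
    _ ≤ ∑ D ∈ 𝒟, _ := measure_biUnion_finset_le _ _
    _ ≤ ∑ D ∈ 𝒟, ENNReal.ofReal (r * W D) :=
        Finset.sum_le_sum fun D _ => bk_code μ hι K (V D) FN hK (hV D) (u D) _
    _ = ENNReal.ofReal (∑ D ∈ 𝒟, r * W D) :=
        (ENNReal.ofReal_sum_of_nonneg fun D hD => mul_nonneg hr (hW D hD)).symm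
    _ ≤ _ := by rw [← Finset.mul_sum]; exact ENNReal.ofReal_le_ofReal hQ

lemma bk_int_sum (φ : X → ℝ) (hφ : Integrable φ μ) (S : Finset G) :
    Integrable (fun x => ∑ c ∈ S, φ (c • x)) μ ∧
      ∫ x, ∑ c ∈ S, φ (c • x) ∂μ = S.card * ∫ x, φ x ∂μ := by
  have h1 : ∀ c : G, Integrable (fun x => φ (c • x)) μ := fun c =>
    (measurePreserving_smul c μ).integrable_comp_of_integrable hφ
  refine ⟨integrable_finsetSum _ fun c _ => h1 c, ?_⟩
  rw [integral_finsetSum _ fun c _ => h1 c]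
  have h2 : ∀ c : G, ∫ x, φ (c • x) ∂μ = ∫ x, φ x ∂μ := fun c =>
    (measurePreserving_smul c μ).integral_comp (measurableEmbedding_const_smul c) φ
  simp [h2]

lemma bk_markov (φ : X → ℝ) (hφ : Integrable φ μ) (h0 : ∀ x, 0 ≤ φ x) (S : Finset G)
    (hS : S.Nonempty) (t : ℝ) (ht : 0 < t) :
    μ.real {x | t * S.card < ∑ c ∈ S, φ (c • x)} ≤ (∫ x, φ x ∂μ) / t := by
  obtain ⟨h1, h2⟩ := bk_int_sum μ φ hφ S
  have hSp : (0 : ℝ) < S.card := by exact_mod_cast hS.card_pos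
  have h3 := mul_meas_ge_le_integral_of_nonneg
    (Eventually.of_forall fun x => Finset.sum_nonneg fun c _ => h0 (c • x)) h1 (t * S.card)
  rw [h2] at h3
  have h4 : μ.real {x | t * S.card < ∑ c ∈ S, φ (c • x)} ≤
      μ.real {x | t * S.card ≤ ∑ c ∈ S, φ (c • x)} :=
    measureReal_mono (by intro x hx; rw [mem_ofPred_eq] at hx ⊢; exact hx.le)
  rw [le_div_iff₀ ht]
  have h5 : t * S.card * μ.real {x | t * S.card < ∑ c ∈ S, φ (c • x)} ≤ S.card * ∫ x, φ x ∂μ :=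
    (mul_le_mul_of_nonneg_left h4 (by positivity)).trans h3
  have : (μ.real {x | t * S.card < ∑ c ∈ S, φ (c • x)} * t) * S.card ≤ (∫ x, φ x ∂μ) * S.card := by
    linarith
  exact le_of_mul_le_mul_right this hSp

lemma bk_count (B : Set X) [DecidablePred (· ∈ B)] (S : Finset G) (x : X) :
    ∑ c ∈ S, B.indicator (fun _ => (1 : ℝ)) (c • x) = ((S.filter fun c => c • x ∈ B).card : ℝ) := by
  rw [← Finset.sum_boole]
  refine Finset.sum_congr rfl fun c _ => ?_
  rw [Set.indicator_apply]

lemma bk_first (B : Set X) (hB : MeasurableSet B) (S : Finset G)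
    (hS : S.Nonempty) (γ : ℝ) (hγ : 2 * γ ≤ μ.real B) :
    γ ≤ μ.real {x | γ * S.card ≤ ∑ c ∈ S, B.indicator (fun _ => (1 : ℝ)) (c • x)} := by
  have hSp : (0 : ℝ) < S.card := by exact_mod_cast hS.card_pos
  by_cases hγ0 : γ < 0
  · exact hγ0.le.trans measureReal_nonneg
  rw [not_lt] at hγ0
  have hi : Integrable (B.indicator (fun _ => (1 : ℝ))) μ :=
    (integrable_const 1).indicator hB
  obtain ⟨h1, h2⟩ := bk_int_sum μ _ hi S
  set A := {x | γ * S.card ≤ ∑ c ∈ S, B.indicator (fun _ => (1 : ℝ)) (c • x)} with hA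
  have hsm : Measurable fun x => ∑ c ∈ S, B.indicator (fun _ => (1 : ℝ)) (c • x) :=
    Finset.measurable_sum _ fun c _ => (measurable_const.indicator hB).comp (measurable_const_smul c)
  have hAm : MeasurableSet A := measurableSet_le measurable_const hsm
  have h3 : ∫ x, B.indicator (fun _ => (1 : ℝ)) x ∂μ = μ.real B := by
    rw [integral_indicator hB]; simp
  have h4 : ∫ x, ∑ c ∈ S, B.indicator (fun _ => (1 : ℝ)) (c • x) ∂μ ≤
      ∫ x, (γ * S.card + A.indicator (fun _ => (S.card : ℝ)) x) ∂μ := by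
    refine integral_mono h1 ((integrable_const _).add ((integrable_const _).indicator hAm))
      fun x => ?_
    simp only
    by_cases hx : x ∈ A
    · rw [Set.indicator_of_mem hx]
      have : ∑ c ∈ S, B.indicator (fun _ => (1 : ℝ)) (c • x) ≤ ∑ c ∈ S, 1 :=
        Finset.sum_le_sum fun c _ => Set.indicator_le_self' (by simp) _
      have h5 : 0 ≤ γ * S.card := by positivity
      simp only [Finset.sum_const, nsmul_eq_mul, mul_one] at this
      linarith
    · rw [Set.indicator_of_notMem hx, add_zero]
      exact (not_le.1 hx).le
  rw [h2, h3, integral_add (integrable_const _) ((integrable_const _).indicator hAm),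
    integral_indicator hAm] at h4
  simp only [integral_const, smul_eq_mul, probReal_univ, one_mul, measureReal_restrict_apply_univ]
    at h4
  have : S.card * γ ≤ S.card * μ.real A := by nlinarith
  exact le_of_mul_le_mul_left this hSp

end Prob

end BKStage2

section BKDet

variable [Group G] [DecidableEq G] [MulAction G X] [MeasurableSpace X] [MeasurableConstSMul G X]
  {k : ℕ} {ι : X → Fin k}

/-- Region described by the data. -/
def bkDU (F : ℕ → Finset G) (S : Finset (Σ _ : G × ℕ, X)) : Finset G :=
  S.biUnion fun q => F q.1.2 * {q.1.1}

open Classical in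
/-- Name predicted by the data. -/
noncomputable def bkDu (F : ℕ → Finset G) (pr : X → Fin k) (d : Fin k)
    (S : Finset (Σ _ : G × ℕ, X)) (τ : Finset (G × Fin k)) (g : G) : Fin k :=
  if h : ∃ i, (g, i) ∈ τ then h.choose
  else if h2 : ∃ q ∈ S, g ∈ F q.1.2 * {q.1.1} then
    pr ((g * h2.choose.1.1⁻¹) • h2.choose.2) else d

open Classical in
lemma bk_match (F : ℕ → Finset G) (FN : Finset G) (pr : X → Fin k) (d : Fin k) (bad : Set X)
    (x : X) (sel : Finset (G × ℕ)) (zf : G × ℕ → X)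
    (hz : ∀ p ∈ sel, ∀ f ∈ F p.2, f • p.1 • x ∉ bad → ι (f • p.1 • x) = pr (f • zf p))
    (g : G) (hg : g ∈ FN) (hgU : g ∈ bkU F sel) :
    ι (g • x) = bkDu F pr d (sel.image fun p => ⟨p, zf p⟩)
      ((FN.filter fun g => g • x ∈ bad).image fun g => (g, ι (g • x))) g := by
  set τ := (FN.filter fun g => g • x ∈ bad).image fun g => (g, ι (g • x)) with hτ
  have hτm : ∀ i, (g, i) ∈ τ → g • x ∈ bad ∧ i = ι (g • x) := by
    intro i hi
    rw [hτ, Finset.mem_image] at hi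
    obtain ⟨g', hg', he⟩ := hi
    rw [Prod.mk.injEq] at he
    obtain ⟨rfl, rfl⟩ := he
    exact ⟨(Finset.mem_filter.1 hg').2, rfl⟩
  rw [bkDu]
  by_cases hbad : g • x ∈ bad
  · have hex : ∃ i, (g, i) ∈ τ := ⟨ι (g • x), by
      rw [hτ, Finset.mem_image]; exact ⟨g, Finset.mem_filter.2 ⟨hg, hbad⟩, rfl⟩⟩
    rw [dif_pos hex]
    exact (hτm _ hex.choose_spec).2.symm
  · have hnex : ¬ ∃ i, (g, i) ∈ τ := fun ⟨i, hi⟩ => hbad (hτm i hi).1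
    rw [dif_neg hnex]
    have hex2 : ∃ q ∈ sel.image (fun p => (⟨p, zf p⟩ : Σ _ : G × ℕ, X)),
        g ∈ F q.1.2 * {q.1.1} := by
      rw [bkU, Finset.mem_biUnion] at hgU
      obtain ⟨p, hp, hgp⟩ := hgU
      exact ⟨⟨p, zf p⟩, Finset.mem_image_of_mem _ hp, hgp⟩
    rw [dif_pos hex2]
    have h1 := hex2.choose_spec
    set q := hex2.choose
    obtain ⟨h3, h4⟩ := h1
    obtain ⟨p, hp, hpq⟩ := Finset.mem_image.1 h3
    rw [bk_mulsing, Finset.mem_image] at h4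
    obtain ⟨f, hf, hfg⟩ := h4
    rw [← hpq] at hf hfg ⊢
    simp only at hf hfg ⊢
    have h5 : g * p.1⁻¹ = f := by rw [← hfg]; simp
    have h6 : g • x = f • p.1 • x := by rw [← hfg, mul_smul]
    rw [h5, h6]
    exact hz p hp f hf (by rw [← h6]; exact hbad)

variable (μ : Measure X) [IsProbabilityMeasure μ] [SMulInvariantMeasure G X μ]

set_option maxHeartbeats 2000000 in
open Classical in
lemma bk_det (K : Finset G) {κ₀ : G} (hκ₀ : κ₀ ∈ K) (M : ℝ) (hM0 : 0 ≤ M)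
    (hM : ∀ y, bkI μ ι K y ≤ M)
    (F : ℕ → Finset G) (FN : Finset G) (n0 n1 : ℕ) (hab : n0 ≤ n1)
    (hne : ∀ n, n0 ≤ n → (F n).Nonempty) (C : ℝ) (hC0 : 0 ≤ C)
    (hC : ∀ n, ((bkT F n).card : ℝ) ≤ C * (F n).card)
    (h h' ε θ ρ γ β a b : ℝ) (hε : ε = h - h') (hε0 : 0 < ε) (hh' : 0 ≤ h')
    (hθ : θ = ε / (4 * h)) (hρ : ρ = 1 / θ + C / (1 - θ)) (hγ : 0 < γ)
    (hβ : β = ε * γ / (16 * ρ)) (ha : 0 < a)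
    (hb1 : b * Real.log (1 / a) ≤ β / 16) (ha1 : a ≤ 1)
    (hbd0 : ∀ n, n0 ≤ n → M * ∑ κ ∈ K, (((F n).filter fun f => (κ₀ * κ⁻¹)⁻¹ * f ∉ F n).card : ℝ)
      ≤ β / 64 * (F n).card)
    (hbdN : M * ∑ κ ∈ K, ((FN.filter fun v => κ₀ * κ⁻¹ * v ∉ FN).card : ℝ) ≤ β / 32 * FN.card)
    (hint : ∑ f ∈ (Finset.Ico n0 n1).biUnion F, ((FN.filter fun v => f * v ∉ FN).card : ℝ) ≤
      γ / 8 * FN.card)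
    (En : ℕ → Set X) (Z : ℕ → Finset X) (pr : X → Fin k) (d : Fin k) (bad : Set X)
    (hcode : ∀ n, ∀ y ∈ En n, ∃ z ∈ Z n, ∀ f ∈ F n, f • y ∉ bad → ι (f • y) = pr (f • z))
    (x : X) (hx : ∀ S : Finset G, bkCyl μ ι S (bkName ι x) ≠ 0)
    (hcount : γ / 4 * FN.card ≤
      ((FN.filter fun c => ∃ n ∈ Finset.Ico n0 n1, c • x ∈ En n).card : ℝ))
    (hm1 : ∑ v ∈ FN, max (bkI μ ι K (κ₀⁻¹ • v • x) / K.card - h) 0 ≤ β / 16 * FN.card)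
    (hm2 : ((FN.filter fun c => c • x ∈ bad).card : ℝ) ≤ b * FN.card)
    (hI : (h - β / 2) * FN.card < bkI μ ι FN x) :
    ∃ D ∈ ((FN ×ˢ Finset.Ico n0 n1).sigma fun p => Z p.2).powerset ×ˢ
        (FN ×ˢ (Finset.univ : Finset (Fin k))).powerset,
      (∀ g ∈ FN \ (FN \ bkDU F D.1), ι (g • x) = bkDu F pr d D.1 D.2 g) ∧
      bkCyl μ ι FN (bkName ι x) ≤ ENNReal.ofReal (Real.exp (-(3 * β / 16 * FN.card)) *
        ((∏ q ∈ D.1, Real.exp (-((h' + ε / 4) * (F q.1.2).card))) * a ^ D.2.card)) *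
        bkKap μ ι K (FN \ bkDU F D.1) (bkName ι x) := by
  have hh : 0 < h := by linarith
  have hθ0 : 0 < θ := by rw [hθ]; positivity
  have hθ4 : θ ≤ 1 / 4 := by
    rw [hθ, div_le_iff₀ (by positivity)]; linarith
  have hρ0 : 0 < ρ := by
    rw [hρ]
    have : 0 < 1 - θ := by linarith
    positivity
  have hβ0 : 0 < β := by rw [hβ]; positivity
  set A : ℕ → Finset G := fun n => FN.filter fun c => F n * {c} ⊆ FN ∧ c • x ∈ En n with hA
  obtain ⟨sel, hs1, hs2, hs3⟩ := bk_cover F A n0 n1 hab θ C hθ0 (by linarith) hC0 hC hne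
  rw [← hρ] at hs3
  have hUsub : bkU F sel ⊆ FN := by
    intro g hg
    rw [bkU, Finset.mem_biUnion] at hg
    obtain ⟨p, hp, hgp⟩ := hg
    exact (Finset.mem_filter.1 (hs1 p hp).2).2.1 hgp
  have hUN : ((bkU F sel).card : ℝ) ≤ FN.card := by exact_mod_cast Finset.card_le_card hUsub
  -- lower bound for the covered part
  have hcov : γ / 8 * FN.card ≤ (((Finset.Ico n0 n1).biUnion A).card : ℝ) := by
    have hsub : (FN.filter fun c => ∃ n ∈ Finset.Ico n0 n1, c • x ∈ En n) ⊆
        ((Finset.Ico n0 n1).biUnion A) ∪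
          ((Finset.Ico n0 n1).biUnion F).biUnion fun f => FN.filter fun v => f * v ∉ FN := by
      intro c hc
      rw [Finset.mem_filter] at hc
      obtain ⟨hc1, n, hn, hcn⟩ := hc
      rw [Finset.mem_union]
      by_cases hin : F n * {c} ⊆ FN
      · exact Or.inl (Finset.mem_biUnion.2 ⟨n, hn, Finset.mem_filter.2 ⟨hc1, hin, hcn⟩⟩)
      · right
        rw [Finset.not_subset] at hin
        obtain ⟨g, hg1, hg2⟩ := hin
        rw [bk_mulsing, Finset.mem_image] at hg1
        obtain ⟨f, hf, rfl⟩ := hg1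
        exact Finset.mem_biUnion.2 ⟨f, Finset.mem_biUnion.2 ⟨n, hn, hf⟩,
          Finset.mem_filter.2 ⟨hc1, hg2⟩⟩
    have h1 := (Finset.card_le_card hsub).trans ((Finset.card_union_le _ _).trans
      (add_le_add le_rfl Finset.card_biUnion_le))
    have h2 : ((FN.filter fun c => ∃ n ∈ Finset.Ico n0 n1, c • x ∈ En n).card : ℝ) ≤
        (((Finset.Ico n0 n1).biUnion A).card : ℝ) +
        ∑ f ∈ (Finset.Ico n0 n1).biUnion F, ((FN.filter fun v => f * v ∉ FN).card : ℝ) := by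
      exact_mod_cast h1
    linarith
  have hUlow : β * FN.card ≤ ε / 2 * (bkU F sel).card := by
    have h1 : γ / 8 * FN.card ≤ ρ * (bkU F sel).card := hcov.trans hs3
    have h2 : β * FN.card = ε / (2 * ρ) * (γ / 8 * FN.card) := by
      rw [hβ]; field_simp; ring
    have h3 : ε / 2 * (bkU F sel).card = ε / (2 * ρ) * (ρ * (bkU F sel).card) := by
      field_simp
    rw [h2, h3]
    exact mul_le_mul_of_nonneg_left h1 (by positivity)
  -- choose the points
  have hzex : ∀ p : G × ℕ, ∃ z : X, p ∈ sel → z ∈ Z p.2 ∧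
      ∀ f ∈ F p.2, f • p.1 • x ∉ bad → ι (f • p.1 • x) = pr (f • z) := by
    intro p
    by_cases hp : p ∈ sel
    · obtain ⟨z, hz1, hz2⟩ := hcode p.2 (p.1 • x) (Finset.mem_filter.1 (hs1 p hp).2).2.2
      exact ⟨z, fun _ => ⟨hz1, hz2⟩⟩
    · exact ⟨x, fun h => absurd h hp⟩
  choose zf hzf using hzex
  set S : Finset (Σ _ : G × ℕ, X) := sel.image fun p => ⟨p, zf p⟩ with hS
  set τ := (FN.filter fun g => g • x ∈ bad).image fun g => (g, ι (g • x)) with hτ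
  have hinj : Set.InjOn (fun p => (⟨p, zf p⟩ : Σ _ : G × ℕ, X)) sel := by
    intro p _ p' _ hpp
    exact congrArg Sigma.fst hpp
  have hDU : bkDU F S = bkU F sel := by
    rw [bkDU, bkU, hS, Finset.image_biUnion]
  have hτc : τ.card = (FN.filter fun g => g • x ∈ bad).card := by
    rw [hτ, Finset.card_image_of_injective]
    intro g g' hgg
    exact congrArg Prod.fst hgg
  refine ⟨(S, τ), ?_, ?_, ?_⟩
  · rw [Finset.mem_product, Finset.mem_powerset, Finset.mem_powerset]
    constructor
    · intro q hq
      obtain ⟨p, hp, rfl⟩ := Finset.mem_image.1 hq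
      rw [Finset.mem_sigma, Finset.mem_product]
      exact ⟨⟨(Finset.mem_filter.1 (hs1 p hp).2).1, (hs1 p hp).1⟩, (hzf p hp).1⟩
    · intro q hq
      obtain ⟨g, hg, rfl⟩ := Finset.mem_image.1 hq
      exact Finset.mem_product.2 ⟨(Finset.mem_filter.1 hg).1, Finset.mem_univ _⟩
  · intro g hg
    simp only [hDU] at hg
    rw [Finset.mem_sdiff, Finset.mem_sdiff, not_and, not_not] at hg
    exact bk_match F FN pr d bad x sel zf (fun p hp => (hzf p hp).2) g hg.1 (hg.2 hg.1)
  · simp only [hDU]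
    set V := FN \ bkU F sel with hV
    have hVc : (V.card : ℝ) = FN.card - (bkU F sel).card := by
      rw [hV, Finset.card_sdiff_of_subset hUsub, Nat.cast_sub (Finset.card_le_card hUsub)]
    have hcost := bk_cost μ K V hκ₀ M hM0 hM x hx
    refine le_trans ?_ (mul_le_mul_right hcost _)
    have hprod : ∏ q ∈ S, Real.exp (-((h' + ε / 4) * (F q.1.2).card)) =
        Real.exp (-((h' + ε / 4) * ∑ p ∈ sel, ((F p.2).card : ℝ))) := by
      rw [hS, Finset.prod_image hinj, ← Real.exp_sum, Finset.sum_neg_distrib, Finset.mul_sum]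
    have hapow : a ^ τ.card = Real.exp (-(τ.card * Real.log (1 / a))) := by
      rw [one_div, Real.log_inv, mul_neg, neg_neg, mul_comm, Real.exp_mul, Real.exp_log ha,
        Real.rpow_natCast]
    rw [bkCyl_eq_exp μ (hx _), hprod, hapow, ← Real.exp_add, ← Real.exp_add,
      ← ENNReal.ofReal_mul (Real.exp_pos _).le, ← Real.exp_add]
    refine ENNReal.ofReal_le_ofReal (Real.exp_le_exp.2 ?_)
    -- the numerical estimates
    have e1 : (h' + ε / 4) * ∑ p ∈ sel, ((F p.2).card : ℝ) ≤ (h - ε / 2) * (bkU F sel).card := by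
      have h1 : 0 < 1 - θ := by linarith
      have h2 : h' + ε / 4 ≤ (h - ε / 2) * (1 - θ) := by
        have h3 : θ * (4 * h) = ε := by
          rw [hθ]; exact div_mul_cancel₀ _ (mul_pos four_pos hh).ne'
        have h4 : h' = h - ε := by linarith
        rw [h4]
        nlinarith [mul_pos hθ0 hε0]
      have h5 : 0 ≤ h - ε / 2 := by linarith
      have h6 : (0 : ℝ) ≤ ∑ p ∈ sel, ((F p.2).card : ℝ) :=
        Finset.sum_nonneg fun _ _ => Nat.cast_nonneg _
      calc _ ≤ ((h - ε / 2) * (1 - θ)) * ∑ p ∈ sel, ((F p.2).card : ℝ) :=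
            mul_le_mul_of_nonneg_right h2 h6
        _ = (h - ε / 2) * ((1 - θ) * ∑ p ∈ sel, ((F p.2).card : ℝ)) := by ring
        _ ≤ _ := mul_le_mul_of_nonneg_left hs2 h5
    have e2 : τ.card * Real.log (1 / a) ≤ β / 16 * FN.card := by
      have hl : 0 ≤ Real.log (1 / a) := Real.log_nonneg (by rw [le_div_iff₀ ha]; linarith)
      rw [hτc]
      calc _ ≤ (b * FN.card) * Real.log (1 / a) := mul_le_mul_of_nonneg_right hm2 hl
        _ = (b * Real.log (1 / a)) * FN.card := by ring
        _ ≤ _ := mul_le_mul_of_nonneg_right hb1 (Nat.cast_nonneg _)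
    have e3 : ∑ v ∈ V, bkI μ ι K (κ₀⁻¹ • v • x) / K.card ≤ h * V.card + β / 16 * FN.card := by
      calc _ ≤ ∑ v ∈ V, (h + max (bkI μ ι K (κ₀⁻¹ • v • x) / K.card - h) 0) :=
            Finset.sum_le_sum fun v _ => by
              linarith [le_max_left (bkI μ ι K (κ₀⁻¹ • v • x) / K.card - h) 0]
        _ = h * V.card + ∑ v ∈ V, max (bkI μ ι K (κ₀⁻¹ • v • x) / K.card - h) 0 := by
            rw [Finset.sum_add_distrib]; simp [mul_comm]
        _ ≤ h * V.card + ∑ v ∈ FN, max (bkI μ ι K (κ₀⁻¹ • v • x) / K.card - h) 0 := by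
            refine add_le_add le_rfl (Finset.sum_le_sum_of_subset_of_nonneg Finset.sdiff_subset
              fun v _ _ => ?_)
            exact le_max_right (bkI μ ι K (κ₀⁻¹ • v • x) / K.card - h) 0
        _ ≤ _ := by linarith
    have e4 : M * ∑ κ ∈ K, ((V.filter fun v => κ₀ * κ⁻¹ * v ∉ V).card : ℝ) ≤
        β / 16 * FN.card := by
      have h1 : ∀ κ ∈ K, ((V.filter fun v => κ₀ * κ⁻¹ * v ∉ V).card : ℝ) ≤
          ((FN.filter fun v => κ₀ * κ⁻¹ * v ∉ FN).card : ℝ) +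
            ∑ p ∈ sel, (((F p.2).filter fun f => (κ₀ * κ⁻¹)⁻¹ * f ∉ F p.2).card : ℝ) := by
        intro κ _
        exact_mod_cast bk_bdry_V F FN sel (κ₀ * κ⁻¹)
      calc _ ≤ M * ∑ κ ∈ K, (((FN.filter fun v => κ₀ * κ⁻¹ * v ∉ FN).card : ℝ) +
            ∑ p ∈ sel, (((F p.2).filter fun f => (κ₀ * κ⁻¹)⁻¹ * f ∉ F p.2).card : ℝ)) :=
            mul_le_mul_of_nonneg_left (Finset.sum_le_sum h1) hM0
        _ = M * ∑ κ ∈ K, ((FN.filter fun v => κ₀ * κ⁻¹ * v ∉ FN).card : ℝ) +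
            ∑ p ∈ sel, M * ∑ κ ∈ K,
              (((F p.2).filter fun f => (κ₀ * κ⁻¹)⁻¹ * f ∉ F p.2).card : ℝ) := by
            rw [Finset.sum_add_distrib, mul_add, Finset.sum_comm, Finset.mul_sum (s := sel)]
        _ ≤ β / 32 * FN.card + ∑ p ∈ sel, β / 64 * ((F p.2).card : ℝ) :=
            add_le_add hbdN (Finset.sum_le_sum fun p hp =>
              hbd0 p.2 (Finset.mem_Ico.1 (hs1 p hp).1).1)
        _ ≤ β / 16 * FN.card := by
            rw [← Finset.mul_sum]
            have h6 : (0 : ℝ) ≤ ∑ p ∈ sel, ((F p.2).card : ℝ) :=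
        Finset.sum_nonneg fun _ _ => Nat.cast_nonneg _
            have h7 : ∑ p ∈ sel, ((F p.2).card : ℝ) ≤ 2 * FN.card := by nlinarith
            have := mul_le_mul_of_nonneg_left h7 (show 0 ≤ β / 64 by positivity)
            linarith
    rw [hVc] at e3
    have e5 : h * ((FN.card : ℝ) - (bkU F sel).card) + (h - ε / 2) * (bkU F sel).card =
      h * FN.card - ε / 2 * (bkU F sel).card := by ring
    have e6 : 0 ≤ β * FN.card := mul_nonneg hβ0.le (Nat.cast_nonneg _)
    linarith

end BKDet

section BKContra

lemma bk_small_tail {F : ℕ → Finset G} (hG : GrowthCond F) (ε : ℝ) (hε : 0 < ε) (η : ℝ)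
    (hη : 0 < η) :
    ∀ᶠ n0 in atTop, ∀ n1, ∑ n ∈ Finset.Ico n0 n1, Real.exp (-(ε / 4 * (F n).card)) ≤ η := by
  set f : ℕ → ℝ := fun n => Real.exp (-(ε / 4 * (F n).card)) with hf
  have hsum : Summable f := by
    refine Summable.of_norm_bounded_eventually_nat
      (g := fun n : ℕ => 1 / (n : ℝ) ^ 2) (Real.summable_one_div_nat_pow.2 one_lt_two) ?_
    filter_upwards [bk_growth_log hG (8 / ε), eventually_gt_atTop 0] with n hn hn0
    have hn' : (0 : ℝ) < n := by exact_mod_cast hn0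
    rw [Real.norm_of_nonneg (Real.exp_pos _).le, one_div, ← Real.exp_log (pow_pos hn' 2),
      ← Real.exp_neg, Real.log_pow]
    refine Real.exp_le_exp.2 ?_
    have : 8 / ε * Real.log n * ε ≤ (F n).card * ε := mul_le_mul_of_nonneg_right hn hε.le
    have h2 : 8 / ε * Real.log n * ε = 8 * Real.log n := by field_simp
    push_cast
    linarith
  filter_upwards [(tendsto_sum_nat_add f).eventually_lt_const hη] with n0 hn0 n1
  rw [Finset.sum_Ico_eq_sum_range]
  refine le_trans ?_ hn0.le
  have : Summable fun k => f (k + n0) := (summable_nat_add_iff n0).2 hsum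
  simp_rw [add_comm n0]
  exact this.sum_le_tsum _ fun _ _ => (Real.exp_pos _).le

variable [Group G] [Countable G] [MulAction G X] [MeasurableSpace X] [MeasurableConstSMul G X]
  (μ : Measure X) [IsProbabilityMeasure μ] [SMulInvariantMeasure G X μ] {k : ℕ} {ι : X → Fin k}

lemma bk_window (E : Set X) (En : ℕ → Set X) (hE : ∀ x ∈ E, ∃ᶠ n in atTop, x ∈ En n)
    (hγ : 0 < μ.real E) (n0 : ℕ) :
    ∃ n1, n0 ≤ n1 ∧ μ.real E / 2 ≤ μ.real (⋃ n ∈ Finset.Ico n0 n1, En n) := by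
  have hmono : Monotone fun n1 => ⋃ n ∈ Finset.Ico n0 n1, En n := by
    intro a b hab
    refine Set.biUnion_subset_biUnion_left ?_
    intro n hn
    exact Finset.Ico_subset_Ico_right hab hn
  have ht := tendsto_measure_iUnion_atTop (μ := μ) hmono
  have hsub : E ⊆ ⋃ n1, ⋃ n ∈ Finset.Ico n0 n1, En n := by
    intro x hx
    obtain ⟨n, hn, hxn⟩ := (frequently_atTop.1 (hE x hx)) n0
    exact Set.mem_iUnion.2 ⟨n + 1, Set.mem_biUnion (Finset.mem_Ico.2 ⟨hn, n.lt_succ_self⟩) hxn⟩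
  have ht2 := (ENNReal.tendsto_toReal (measure_ne_top μ _)).comp ht
  have hlt : μ.real E / 2 < (μ (⋃ n1, ⋃ n ∈ Finset.Ico n0 n1, En n)).toReal :=
    lt_of_lt_of_le (by linarith) (measureReal_mono hsub)
  obtain ⟨n1, h1, h2⟩ := ((ht2.eventually_const_lt hlt).and (eventually_ge_atTop n0)).exists
  exact ⟨n1, h2, le_of_lt h1⟩

set_option maxHeartbeats 2000000 in
open Classical in
lemma bk_stage2 (herg : IsErgodicGAction G μ) (hι : Measurable ι)
    (F : ℕ → Finset G) (hF : IsFolnerSeq F) (hT : IsTemperedSeq F) (hG : GrowthCond F)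
    (h h' : ℝ) (hh' : 0 ≤ h') (hlt : h' < h)
    (H1 : ∀ η > 0, ∃ᶠ n in atTop, ∫ x, bkI μ ι (F n) x ∂μ ≤ (h + η) * (F n).card)
    (H2 : ∀ η > 0, ∀ᶠ n in atTop, (h - η) * (F n).card ≤ ∫ x, bkI μ ι (F n) x ∂μ)
    (E : Set X) (hE : 0 < μ.real E)
    (Hcode : ∀ b > 0, ∃ bad : Set X, MeasurableSet bad ∧ μ.real bad ≤ b ∧ ∃ pr : X → Fin k,
      ∃ Z : ℕ → Finset X, ∃ En : ℕ → Set X, (∀ n, MeasurableSet (En n)) ∧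
      (∀ n, ((Z n).card : ℝ) ≤ Real.exp (h' * (F n).card)) ∧
      (∀ x ∈ E, ∃ᶠ n in atTop, x ∈ En n) ∧
      ∀ n, ∀ y ∈ En n, ∃ z ∈ Z n, ∀ f ∈ F n, f • y ∉ bad → ι (f • y) = pr (f • z)) : False := by
  obtain ⟨C, hC0, hC⟩ := hT
  have hh : 0 < h := by linarith
  obtain ⟨ε, hε⟩ : ∃ ε, ε = h - h' := ⟨_, rfl⟩
  have hε0 : 0 < ε := by linarith
  obtain ⟨θ, hθ⟩ : ∃ θ, θ = ε / (4 * h) := ⟨_, rfl⟩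
  have hθ0 : 0 < θ := by rw [hθ]; positivity
  have hθ4 : θ ≤ 1 / 4 := by
    rw [hθ, div_le_iff₀ (by positivity)]; linarith
  obtain ⟨ρ, hρ⟩ : ∃ ρ, ρ = 1 / θ + C / (1 - θ) := ⟨_, rfl⟩
  have hρ0 : 0 < ρ := by
    rw [hρ]
    have : 0 < 1 - θ := by linarith
    positivity
  obtain ⟨γ, hγe⟩ : ∃ γ, γ = μ.real E := ⟨_, rfl⟩
  have hγ : 0 < γ := by rw [hγe]; exact hE
  obtain ⟨β, hβ⟩ : ∃ β, β = ε * γ / (16 * ρ) := ⟨_, rfl⟩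
  have hβ0 : 0 < β := by rw [hβ]; positivity
  have hcard := bk_growth_top hG
  -- the set K
  obtain ⟨m, hm1, hm2⟩ := ((bk_stage1 μ herg hι F hF hG h hh.le H1 (β * γ / 512)
    (by positivity)).and (hcard.eventually_gt_atTop 0)).exists
  obtain ⟨K, hK⟩ : ∃ K, K = F m := ⟨_, rfl⟩
  rw [← hK] at hm1 hm2
  have hKne : K.Nonempty := Finset.card_pos.1 (by exact_mod_cast hm2)
  obtain ⟨κ₀, hκ₀⟩ := hKne
  obtain ⟨M, hM0, hM⟩ := bkI_bdd μ (ι := ι) K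
  set φ : X → ℝ := fun x => max (bkI μ ι K (κ₀⁻¹ • x) / K.card - h) 0 with hφ
  have hφeq : ∀ x, φ x = (fun y => max (bkI μ ι K y - h * K.card) 0 / K.card) (κ₀⁻¹ • x) := by
    intro x
    simp only [hφ]
    rw [← max_div_div_right hm2.le, zero_div, sub_div, mul_div_cancel_right₀ _ hm2.ne']
  have hgint : Integrable (fun y => max (bkI μ ι K y - h * K.card) 0 / (K.card : ℝ)) μ :=
    (((bkI_integrable μ hι K).sub (integrable_const _)).sup (integrable_const 0)).div_const _
  have hφint : Integrable φ μ := by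
    rw [funext hφeq]
    exact (measurePreserving_smul κ₀⁻¹ μ).integrable_comp_of_integrable hgint
  have hφI : ∫ x, φ x ∂μ ≤ β * γ / 512 := by
    rw [funext hφeq, bk_integral_smul μ (fun y => max (bkI μ ι K y - h * K.card) 0 / K.card),
      integral_div, div_le_iff₀ hm2]
    exact hm1
  obtain ⟨x₀⟩ := nonempty_of_isProbabilityMeasure μ
  have hk : (0 : ℝ) < k := by exact_mod_cast (ι x₀).pos
  obtain ⟨a, ha⟩ : ∃ a, a = min 1 (β / (16 * k)) := ⟨_, rfl⟩
  have ha0 : 0 < a := by rw [ha]; positivity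
  have ha1 : a ≤ 1 := by rw [ha]; exact min_le_left _ _
  have hak : a * k ≤ β / 16 := by
    have : a ≤ β / (16 * k) := by rw [ha]; exact min_le_right _ _
    calc a * k ≤ β / (16 * k) * k := mul_le_mul_of_nonneg_right this hk.le
      _ = β / 16 := by field_simp
  have hla : 0 ≤ Real.log (1 / a) := Real.log_nonneg (by rw [le_div_iff₀ ha0]; linarith)
  obtain ⟨b, hb⟩ : ∃ b, b = β / (16 * (Real.log (1 / a) + 1)) := ⟨_, rfl⟩
  have hb0 : 0 < b := by rw [hb]; positivity
  have hb1 : b * Real.log (1 / a) ≤ β / 16 := by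
    have : b * (Real.log (1 / a) + 1) = β / 16 := by rw [hb]; field_simp
    linarith
  obtain ⟨bad, hbadm, hbad, pr, Z, En, hEn, hZ, hEf, hcode⟩ := Hcode (b * γ / 32) (by positivity)
  -- the scales
  obtain ⟨n0, hn0⟩ := eventually_atTop.1 ((hcard.eventually_gt_atTop 0).and
    ((bk_bdry_gen hF hG K (fun κ => (κ₀ * κ⁻¹)⁻¹) M (β / 64) (by positivity)).and
      (bk_small_tail hG ε hε0 (β / 16) (by positivity))))
  have hne : ∀ n, n0 ≤ n → (F n).Nonempty := fun n hn =>
    Finset.card_pos.1 (by exact_mod_cast (hn0 n hn).1)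
  obtain ⟨n1, hab, hn1⟩ := bk_window μ E En hEf hE n0
  rw [← hγe] at hn1
  set E' := ⋃ n ∈ Finset.Ico n0 n1, En n with hE'
  have hE'm : MeasurableSet E' := Finset.measurableSet_biUnion _ fun n _ => hEn n
  -- the large index
  have hexp : ∀ᶠ n in atTop, Real.exp (-(β / 16 * (F n).card)) < γ / 16 := by
    have : Tendsto (fun n => Real.exp (-(β / 16 * (F n).card))) atTop (𝓝 0) :=
      Real.tendsto_exp_neg_atTop_nhds_zero.comp (hcard.const_mul_atTop (by positivity))
    exact this.eventually_lt_const (by positivity)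
  obtain ⟨N, hN1, hN2, hN3, hN4, hN5, hN6⟩ := ((hcard.eventually_gt_atTop 0).and
    ((bk_bdry_gen hF hG K (fun κ => κ₀ * κ⁻¹) M (β / 32) (by positivity)).and
    ((bk_bdry_gen hF hG ((Finset.Ico n0 n1).biUnion F) id 1 (γ / 8) (by positivity)).and
    ((bk_stage1 μ herg hι F hF hG h hh.le H1 (β * γ / 64) (by positivity)).and
    ((H2 (β * γ / 64) (by positivity)).and hexp))))).exists
  obtain ⟨FN, hFN⟩ : ∃ FN, FN = F N := ⟨_, rfl⟩
  rw [← hFN] at hN1 hN2 hN3 hN4 hN5 hN6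
  have hFNne : FN.Nonempty := Finset.card_pos.1 (by exact_mod_cast hN1)
  rw [one_mul] at hN3
  simp only [id] at hN3
  -- the exceptional sets
  have g1 := bk_first μ E' hE'm FN hFNne (γ / 4) (by linarith)
  have g2 := bk_markov μ φ hφint (fun x => le_max_right _ _) FN hFNne (β / 16) (by positivity)
  have g3 := bk_markov μ (bad.indicator fun _ => (1 : ℝ)) ((integrable_const 1).indicator hbadm)
    (fun x => Set.indicator_nonneg (by simp) x) FN hFNne b hb0
  have hbi : ∫ x, bad.indicator (fun _ => (1 : ℝ)) x ∂μ = μ.real bad := by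
    rw [integral_indicator hbadm]; simp
  rw [hbi] at g3
  set Ω := ((FN ×ˢ Finset.Ico n0 n1).sigma fun p => Z p.2) with hΩ
  set Ω' := FN ×ˢ (Finset.univ : Finset (Fin k)) with hΩ'
  set W : Finset (Σ _ : G × ℕ, X) × Finset (G × Fin k) → ℝ := fun D =>
    (∏ q ∈ D.1, Real.exp (-((h' + ε / 4) * (F q.1.2).card))) * a ^ D.2.card with hW
  have hWsum : Real.exp (-(3 * β / 16 * FN.card)) * ∑ D ∈ Ω.powerset ×ˢ Ω'.powerset, W D ≤
      Real.exp (-(β / 16 * FN.card)) := by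
    have h1 := bk_weight Ω (fun q => Real.exp (-((h' + ε / 4) * (F q.1.2).card)))
      (fun _ _ => (Real.exp_pos _).le) Ω' a ha0.le
    have h2 : ∑ q ∈ Ω, Real.exp (-((h' + ε / 4) * (F q.1.2).card)) ≤ β / 16 * FN.card := by
      rw [hΩ, Finset.sum_sigma, Finset.sum_product]
      simp only [Finset.sum_const, nsmul_eq_mul]
      have h3 : ∑ n ∈ Finset.Ico n0 n1, ((Z n).card : ℝ) *
          Real.exp (-((h' + ε / 4) * (F n).card)) ≤ β / 16 := by
        refine le_trans (Finset.sum_le_sum fun n _ => ?_) ((hn0 n0 le_rfl).2.2 n1)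
        calc _ ≤ Real.exp (h' * (F n).card) * Real.exp (-((h' + ε / 4) * (F n).card)) :=
              mul_le_mul_of_nonneg_right (hZ n) (Real.exp_pos _).le
          _ = _ := by rw [← Real.exp_add]; congr 1; ring
      rw [mul_comm (β / 16)]
      exact mul_le_mul_of_nonneg_left h3 hN1.le
    have h4 : a * Ω'.card ≤ β / 16 * FN.card := by
      rw [hΩ', Finset.card_product, Finset.card_univ, Fintype.card_fin]
      push_cast
      calc a * (FN.card * k) = (a * k) * FN.card := by ring
        _ ≤ _ := mul_le_mul_of_nonneg_right hak hN1.le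
    calc _ ≤ Real.exp (-(3 * β / 16 * FN.card)) * Real.exp (β / 16 * FN.card + β / 16 * FN.card) :=
          mul_le_mul_of_nonneg_left (h1.trans (Real.exp_le_exp.2 (add_le_add h2 h4)))
            (Real.exp_pos _).le
      _ = _ := by rw [← Real.exp_add]; congr 1; ring
  have g4 := bk_union μ hι K FN ⟨κ₀, hκ₀⟩ (Ω.powerset ×ˢ Ω'.powerset)
    (fun D => FN \ bkDU F D.1) (fun D => Finset.sdiff_subset)
    (fun D => bkDu F pr (ι x₀) D.1 D.2) W
    (fun D _ => mul_nonneg (Finset.prod_nonneg fun _ _ => (Real.exp_pos _).le)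
      (pow_nonneg ha0.le _)) _ _ (Real.exp_pos _).le hWsum
  set B1 := {x | β / 16 * FN.card < ∑ c ∈ FN, φ (c • x)} with hB1
  set B2 := {x | b * FN.card < ∑ c ∈ FN, bad.indicator (fun _ => (1 : ℝ)) (c • x)} with hB2
  set B3 := {x | ∃ D ∈ Ω.powerset ×ˢ Ω'.powerset,
    (∀ g ∈ FN \ (FN \ bkDU F D.1), ι (g • x) = bkDu F pr (ι x₀) D.1 D.2 g) ∧
      bkCyl μ ι FN (bkName ι x) ≤ ENNReal.ofReal (Real.exp (-(3 * β / 16 * FN.card)) * W D) *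
        bkKap μ ι K (FN \ bkDU F D.1) (bkName ι x)} with hB3
  set G1 := {x | γ / 4 * FN.card ≤ ∑ c ∈ FN, E'.indicator (fun _ => (1 : ℝ)) (c • x)} with hG1
  set Lo := {x | bkI μ ι FN x ≤ (h - β / 2) * FN.card} with hLo
  have hLom : MeasurableSet Lo := measurableSet_le (bkI_measurable μ hι FN) measurable_const
  have hsub : G1 ≤ᵐ[μ] (((Lo ∪ B1) ∪ B2) ∪ B3 : Set X) := by
    filter_upwards [bkI_pos_ae μ (ι := ι) (G := G)] with x hx hxG
    change x ∈ G1 at hxG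
    change x ∈ (((Lo ∪ B1) ∪ B2) ∪ B3 : Set X)
    by_contra hcon
    simp only [Set.mem_union, not_or] at hcon
    obtain ⟨⟨⟨c1, c2⟩, c3⟩, c4⟩ := hcon
    apply c4
    rw [hLo, mem_ofPred_eq, not_le] at c1
    rw [hB1, mem_ofPred_eq, not_lt] at c2
    rw [hB2, mem_ofPred_eq, not_lt, bk_count] at c3
    rw [hG1, mem_ofPred_eq, bk_count] at hxG
    refine bk_det μ K hκ₀ M hM0 hM F FN n0 n1 hab hne C hC0.le (bkT_card hC) h h' ε θ ρ γ β a b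
      hε hε0 hh' hθ hρ hγ hβ ha0 hb1 ha1 (fun n hn => (hn0 n hn).2.1) hN2 hN3 En Z pr (ι x₀) bad
      hcode x hx ?_ c2 c3 c1
    refine hxG.trans (le_of_eq ?_)
    congr 2
    ext c
    simp [hE']
  have hmeas : γ / 8 ≤ μ.real Lo := by
    have h1 : μ.real G1 ≤ μ.real (((Lo ∪ B1) ∪ B2) ∪ B3 : Set X) :=
      ENNReal.toReal_mono (measure_ne_top _ _) (measure_mono_ae hsub)
    have h2 := measureReal_union_le (μ := μ) ((Lo ∪ B1) ∪ B2) B3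
    have h3 := measureReal_union_le (μ := μ) (Lo ∪ B1) B2
    have h4 := measureReal_union_le (μ := μ) Lo B1
    have h5 : μ.real B1 ≤ γ / 32 := by
      refine g2.trans ?_
      rw [div_le_iff₀ (by positivity)]
      linarith
    have h6 : μ.real B2 ≤ γ / 32 := by
      refine g3.trans ?_
      rw [div_le_iff₀ hb0]
      linarith
    have h7 : μ.real B3 ≤ γ / 16 :=
      (ENNReal.toReal_le_of_le_ofReal (Real.exp_pos _).le g4).trans hN6.le
    linarith
  -- the contradiction
  have hIint := bkI_integrable μ hι FN
  have hmaxint : Integrable (fun x => max (bkI μ ι FN x - h * FN.card) 0) μ :=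
    (hIint.sub (integrable_const _)).sup (integrable_const 0)
  have hindint : Integrable (Lo.indicator fun _ => β / 2 * (FN.card : ℝ)) μ :=
    (integrable_const _).indicator hLom
  have hsumint : Integrable (fun x => h * FN.card + max (bkI μ ι FN x - h * FN.card) 0) μ :=
    (integrable_const _).add hmaxint
  have hfin : ∫ x, bkI μ ι FN x ∂μ ≤ ∫ x, ((h * FN.card + max (bkI μ ι FN x - h * FN.card) 0) -
      Lo.indicator (fun _ => β / 2 * (FN.card : ℝ)) x) ∂μ := by
    refine integral_mono hIint (((integrable_const _).add hmaxint).sub hindint) fun x => ?_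
    simp only
    by_cases hx : x ∈ Lo
    · rw [Set.indicator_of_mem hx]
      have h1 : bkI μ ι FN x ≤ (h - β / 2) * FN.card := hx
      have h2 := le_max_right (bkI μ ι FN x - h * FN.card) 0
      linarith
    · rw [Set.indicator_of_notMem hx]
      have h2 := le_max_left (bkI μ ι FN x - h * FN.card) 0
      linarith
  rw [integral_sub hsumint hindint,
    integral_add (integrable_const _) hmaxint, integral_indicator hLom] at hfin
  simp only [integral_const, smul_eq_mul, probReal_univ, one_mul, measureReal_restrict_apply_univ]
    at hfin
  have h8 : γ / 8 * (β / 2 * FN.card) ≤ μ.real Lo * (β / 2 * FN.card) :=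
    mul_le_mul_of_nonneg_right hmeas (by positivity)
  have h9 : 0 < β * γ * FN.card := by positivity
  linarith

end BKContra

section BKFinal

lemma bk_part [MeasurableSpace X] [MetricSpace X] {k : ℕ} {P : Fin k → Set X}
    (hP : IsMeasPartition P) : ∃ ι : X → Fin k, Measurable ι ∧ ∀ i x, x ∈ P i ↔ ι x = i := by
  obtain ⟨h1, h2, h3⟩ := hP
  have hex : ∀ x, ∃ i, x ∈ P i := fun x => by
    have : x ∈ ⋃ i, P i := by rw [h3]; trivial
    exact Set.mem_iUnion.1 this
  choose ι hι using hex
  have hiff : ∀ i x, x ∈ P i ↔ ι x = i := by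
    intro i x
    constructor
    · intro hx
      by_contra hne
      exact Set.disjoint_left.1 (h2 hne) (hι x) hx
    · rintro rfl; exact hι x
  refine ⟨ι, measurable_to_countable' fun i => ?_, hiff⟩
  have : ι ⁻¹' {i} = P i := by ext x; exact (hiff i x).symm
  rw [this]; exact h1 i

variable [Group G] [Countable G] [MetricSpace X] [CompactSpace X]
    [MulAction G X] [ContinuousConstSMul G X] [MeasurableSpace X] [BorelSpace X]
    (μ : Measure X) [IsProbabilityMeasure μ] [SMulInvariantMeasure G X μ]

lemma bk_partH {k : ℕ} {P : Fin k → Set X} {ι : X → Fin k} (hι : Measurable ι)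
    (hP : ∀ i x, x ∈ P i ↔ ι x = i) (S : Finset G) :
    partH μ P S = ∫ x, bkI μ ι S x ∂μ := by
  letI := Classical.decEq G
  rw [bkI_integral μ hι S, partH]
  refine Finset.sum_congr rfl fun u _ => ?_
  rw [bkMass]
  congr 3
  ext x
  simp [hP]

lemma bk_freq (F : ℕ → Finset G) (hG : GrowthCond F) (r : ℝ) (x : X) (δ : ℝ)
    (hx : lowLoc μ F x δ < ENNReal.ofReal r) :
    ∃ᶠ n in atTop, ENNReal.ofReal (Real.exp (-(r * (F n).card))) ≤ μ (bowenBall (F n) x δ) := by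
  have h1 := (frequently_lt_of_liminf_lt (by isBoundedDefault) hx).and_eventually
    ((bk_growth_top hG).eventually_gt_atTop 0)
  refine h1.mono ?_
  rintro n ⟨h2, h3⟩
  rw [locTerm] at h2
  split_ifs at h2 with h0
  · exact absurd h2 not_top_lt
  have h4 := (ENNReal.ofReal_lt_ofReal_iff_of_nonneg (by
    refine div_nonneg (neg_nonneg.2 (Real.log_nonpos ENNReal.toReal_nonneg ?_)) h3.le
    exact prob_le_one.trans_eq' rfl |> fun h => ENNReal.toReal_le_of_le_ofReal zero_le_one
      (by simpa using h))).1 h2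
  rw [div_lt_iff₀ h3] at h4
  have hpos : 0 < (μ (bowenBall (F n) x δ)).toReal :=
    ENNReal.toReal_pos h0 (measure_ne_top _ _)
  rw [← ENNReal.ofReal_toReal (measure_ne_top μ (bowenBall (F n) x δ))]
  refine ENNReal.ofReal_le_ofReal ?_
  rw [← Real.exp_log hpos]
  exact Real.exp_le_exp.2 (by linarith)

lemma bk_one (herg : IsErgodicGAction G μ)
    (F : ℕ → Finset G) (hFol : IsFolnerSeq F) (hTemp : IsTemperedSeq F)
    (hGrow : GrowthCond F) {k : ℕ} {P : Fin k → Set X} (hP : IsMeasPartition P) (r : ℝ)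
    (hr : 0 ≤ r) (hlt : r < partEnt μ F P) :
    ∀ᵐ x ∂μ, ENNReal.ofReal r ≤ ⨆ (δ : ℝ) (_ : 0 < δ), lowLoc μ F x δ := by
  obtain ⟨ι, hι, hιP⟩ := bk_part hP
  have hcard := bk_growth_top hGrow
  set f : ℕ → ℝ := fun n => partH μ P (F n) / (F n).card with hf
  have hfe : ∀ n, f n = (∫ x, bkI μ ι (F n) x ∂μ) / (F n).card := fun n => by
    simp only [hf]; rw [bk_partH μ hι hιP]
  have hlow : ∀ n, 0 ≤ f n := fun n => by
    rw [hfe]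
    exact div_nonneg (integral_nonneg fun x => bkI_nonneg μ _ _) (Nat.cast_nonneg _)
  have hbdl : IsBoundedUnder (· ≥ ·) atTop f :=
    isBoundedUnder_of ⟨0, hlow⟩
  have hbdu : IsBoundedUnder (· ≤ ·) atTop f := by
    refine isBoundedUnder_of_eventually_le (a := Real.log k + 1) ?_
    filter_upwards [hcard.eventually_ge_atTop 1] with n hn
    rw [hfe, div_le_iff₀ (by linarith)]
    have := bkI_tail μ hι (F n) Set.univ
    rw [setIntegral_univ, probReal_univ, mul_one] at this
    nlinarith
  have hh : partEnt μ F P = liminf f atTop := rfl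
  set h := partEnt μ F P with hhdef
  have H1 : ∀ η > 0, ∃ᶠ n in atTop, ∫ x, bkI μ ι (F n) x ∂μ ≤ (h + η) * (F n).card := by
    intro η hη
    have h1 : liminf f atTop < h + η := by rw [← hh]; linarith
    refine ((frequently_lt_of_liminf_lt hbdu.isCoboundedUnder_ge h1).and_eventually
      (hcard.eventually_gt_atTop 0)).mono ?_
    rintro n ⟨h2, h3⟩
    rw [hfe, div_lt_iff₀ h3] at h2
    exact h2.le
  have H2 : ∀ η > 0, ∀ᶠ n in atTop, (h - η) * (F n).card ≤ ∫ x, bkI μ ι (F n) x ∂μ := by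
    intro η hη
    have h1 : h - η < liminf f atTop := by rw [← hh]; linarith
    filter_upwards [eventually_lt_of_lt_liminf h1 hbdl, hcard.eventually_gt_atTop 0] with n h2 h3
    rw [hfe, lt_div_iff₀ h3] at h2
    exact h2.le
  rw [ae_iff]
  by_contra hpos
  set E := {x | ¬ ENNReal.ofReal r ≤ ⨆ (δ : ℝ) (_ : 0 < δ), lowLoc μ F x δ} with hE
  refine bk_stage2 μ herg hι F hFol hTemp hGrow h r hr hlt H1 H2 E
    (ENNReal.toReal_pos hpos (measure_ne_top _ _)) ?_
  intro b hb
  obtain ⟨bad, hb1, hb2, δ, hδ, pr, hpr⟩ := bk_bowen (G := G) μ hι r b hb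
  choose Z hZ1 hZ2 using hpr
  refine ⟨bad, hb1, hb2, pr, fun n => Z (F n), fun n =>
    {y | ENNReal.ofReal (Real.exp (-(r * (F n).card))) ≤ μ (bowenBall (F n) y δ)}, ?_, ?_, ?_, ?_⟩
  · intro n
    exact measurableSet_le measurable_const (bk_ball_meas μ (F n) δ)
  · intro n; exact hZ1 (F n)
  · intro x hx
    rw [hE, mem_ofPred_eq, not_le] at hx
    refine bk_freq μ F hGrow r x δ (lt_of_le_of_lt ?_ hx)
    exact le_iSup₂ (f := fun (δ : ℝ) (_ : 0 < δ) => lowLoc μ F x δ) δ hδ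
  · intro n y hy
    exact hZ2 (F n) y hy

end BKFinal


/-- lower bound in the Brin–Katok formula. For a `G`-invariant ergodic
Borel probability measure `μ` and a tempered Følner sequence `{F_n}` with
`lim_n |F_n|/log n = ∞`, for `μ`-a.e. `x`,
`lim_{δ→0} liminf_n -(1/|F_n|) log μ(B_{F_n}(x,δ)) ≥ h_μ(X,G)`. -/
theorem brin_katok_lower
    [Group G] [Countable G] [MetricSpace X] [CompactSpace X]
    [MulAction G X] [ContinuousConstSMul G X] [MeasurableSpace X] [BorelSpace X]
    (μ : Measure X) [IsProbabilityMeasure μ] [SMulInvariantMeasure G X μ]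
    (herg : IsErgodicGAction G μ)
    (F : ℕ → Finset G) (hFol : IsFolnerSeq F) (hTemp : IsTemperedSeq F)
    (hGrow : GrowthCond F) :
    ∀ᵐ x ∂μ, measEnt μ F ≤ ⨆ (δ : ℝ) (_ : 0 < δ), lowLoc μ F x δ := by
  have key : ∀ᵐ x ∂μ, ∀ q : ℚ, 0 ≤ q → ENNReal.ofReal (q : ℝ) < measEnt μ F →
      ENNReal.ofReal (q : ℝ) ≤ ⨆ (δ : ℝ) (_ : 0 < δ), lowLoc μ F x δ := by
    rw [ae_all_iff]
    intro q
    by_cases hq : 0 ≤ q ∧ ENNReal.ofReal (q : ℝ) < measEnt μ F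
    · have h2 := hq.2
      simp only [measEnt, lt_iSup_iff] at h2
      obtain ⟨k, P, hP, hlt⟩ := h2
      have hlt' : (q : ℝ) < partEnt μ F P :=
        (ENNReal.ofReal_lt_ofReal_iff_of_nonneg (by exact_mod_cast hq.1)).1 hlt
      filter_upwards [bk_one μ herg F hFol hTemp hGrow hP q (by exact_mod_cast hq.1) hlt']
        with x hx _ _
      exact hx
    · exact Eventually.of_forall fun x h0 h1 => absurd ⟨h0, h1⟩ hq
  filter_upwards [key] with x hx
  refine le_of_forall_lt fun c hc => ?_
  obtain ⟨q, hq0, hq1, hq2⟩ := ENNReal.lt_iff_exists_rat_btwn.1 hc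
  exact lt_of_lt_of_le hq1 (hx q hq0 hq2)
end

section
/- Let G be a countable discrete group acting continuously on a compact metric space (X,d), let {F_n} be a sequence of finite subsets of G satisfying lim_{n→∞} |F_n|/log n = ∞, and let K ⊆ X be non-empty and compact with h^B_top(K,{F_n}) > 0. Then for every s with 0 < s < h^B_top(K,{F_n}) there exists a Borel probability measure μ on X with μ(K) = 1 and h̲_μ^{loc}({F_n}) ≥ s; consequently h^B_top(K,{F_n}) ≤ sup{ h̲_μ^{loc}({F_n}) : μ a Borel probability measure with μ(K) = 1 }. -/
open Filter Set MeasureTheory Topology ENNReal Pointwise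

variable {G X : Type*}

section Frostman

open CompactlySupported

variable {ι : Type*}

/-- Admissible values for the weighted covering functional. -/
def wtVals {Y : Type*} [TopologicalSpace Y] (K : Set Y) (B : ι → Set Y) (w : ι → ℝ)
    (f : Y → ℝ) : Set ℝ :=
  {r : ℝ | ∃ c : ι →₀ ℝ, (∀ i, 0 ≤ c i) ∧
    (∀ x ∈ K, f x ≤ Finsupp.linearCombination ℝ (fun i => (B i).indicator (fun _ => (1 : ℝ)) x) c) ∧
    Finsupp.linearCombination ℝ w c = r}

theorem wt_lc_nonneg {v : ι → ℝ} (hv : ∀ i, 0 ≤ v i) {c : ι →₀ ℝ} (hc : ∀ i, 0 ≤ c i) :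
    0 ≤ Finsupp.linearCombination ℝ v c := by
  rw [Finsupp.linearCombination_apply]
  exact Finset.sum_nonneg fun i _ => mul_nonneg (hc i) (hv i)

theorem abstract_frostman {Y : Type*} [TopologicalSpace Y] [T2Space Y] [CompactSpace Y]
    [MeasurableSpace Y] [BorelSpace Y] (K : Set Y) (hKc : IsCompact K)
    (B : ι → Set Y) (hB : ∀ i, IsOpen (B i)) (w : ι → ℝ) (hw : ∀ i, 0 ≤ w i)
    (T : Finset ι) (hT : K ⊆ ⋃ i ∈ T, B i) (c0 : ℝ) (hc0 : 0 < c0)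
    (hlow : ∀ c : ι →₀ ℝ, (∀ i, 0 ≤ c i) →
      (∀ x ∈ K, 1 ≤ Finsupp.linearCombination ℝ
        (fun i => (B i).indicator (fun _ => (1 : ℝ)) x) c) →
      c0 ≤ Finsupp.linearCombination ℝ w c) :
    ∃ μ : Measure Y, IsProbabilityMeasure μ ∧ μ K = 1 ∧
      ∀ i, μ (B i) ≤ ENNReal.ofReal (w i / c0) := by
  classical
  have hind : ∀ x i, 0 ≤ (B i).indicator (fun _ => (1 : ℝ)) x := fun x i =>
    Set.indicator_nonneg (fun _ _ => zero_le_one) x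
  set S : (Y → ℝ) → Set ℝ := wtVals K B w with hS
  have hbd : ∀ f, ∀ r ∈ S f, 0 ≤ r := by
    rintro f r ⟨c, hc, -, rfl⟩
    exact wt_lc_nonneg hw hc
  have hbdd : ∀ f, BddBelow (S f) := fun f => ⟨0, fun r hr => hbd f r hr⟩
  have hne : ∀ f : C_c(Y, ℝ), (S f).Nonempty := by
    intro f
    obtain ⟨M, hM⟩ := (hKc.image f.continuous).bddAbove
    refine ⟨_, ∑ i ∈ T, Finsupp.single i (max M 0), ?_, ?_, rfl⟩
    · intro i
      rw [Finsupp.finsetSum_apply]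
      refine Finset.sum_nonneg fun j _ => ?_
      rw [Finsupp.single_apply]
      split_ifs
      · exact le_max_right _ _
      · exact le_rfl
    · intro x hx
      rw [map_sum]
      simp only [Finsupp.linearCombination_single, smul_eq_mul]
      obtain ⟨i, hi, hxi⟩ := mem_iUnion₂.1 (hT hx)
      calc f x ≤ max M 0 := le_max_of_le_left (hM ⟨x, hx, rfl⟩)
        _ = max M 0 * (B i).indicator (fun _ => (1 : ℝ)) x := by simp [hxi]
        _ ≤ _ := Finset.single_le_sum
          (f := fun i => max M 0 * (B i).indicator (fun _ => (1 : ℝ)) x)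
          (fun j _ => mul_nonneg (le_max_right _ _) (hind x j)) hi
  let p : C_c(Y, ℝ) → ℝ := fun f => sInf (S f)
  have hp0 : ∀ f, 0 ≤ p f := fun f => Real.sInf_nonneg (hbd f)
  have hple : ∀ (f : C_c(Y, ℝ)) r, r ∈ S f → p f ≤ r := fun f r hr => csInf_le (hbdd f) hr
  have hsmul : ∀ (t : ℝ), 0 < t → ∀ f : C_c(Y, ℝ), p (t • f) ≤ t * p f := by
    intro t ht f
    rw [← div_le_iff₀' ht]
    refine le_csInf (hne f) ?_
    rintro r ⟨c, hc, hcf, rfl⟩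
    rw [div_le_iff₀' ht]
    refine hple _ _ ⟨t • c, fun i => ?_, fun x hx => ?_, ?_⟩
    · simpa using mul_nonneg ht.le (hc i)
    · rw [map_smul]
      simpa using mul_le_mul_of_nonneg_left (hcf x hx) ht.le
    · rw [map_smul, smul_eq_mul]
  have hsmul' : ∀ (t : ℝ), 0 < t → ∀ f : C_c(Y, ℝ), p (t • f) = t * p f := by
    intro t ht f
    refine le_antisymm (hsmul t ht f) ?_
    have := hsmul t⁻¹ (inv_pos.2 ht) (t • f)
    rw [smul_smul, inv_mul_cancel₀ ht.ne', one_smul] at this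
    rwa [← div_eq_inv_mul, le_div_iff₀' ht] at this
  have hadd : ∀ f g : C_c(Y, ℝ), p (f + g) ≤ p f + p g := by
    intro f g
    rw [← sub_le_iff_le_add']
    refine le_csInf (hne g) fun r2 hr2 => ?_
    rw [sub_le_comm]
    refine le_csInf (hne f) fun r1 hr1 => ?_
    rw [sub_le_iff_le_add]
    obtain ⟨c1, h1, h1', rfl⟩ := hr1
    obtain ⟨c2, h2, h2', rfl⟩ := hr2
    refine hple _ _ ⟨c1 + c2, fun i => ?_, fun x hx => ?_, ?_⟩
    · simpa using add_nonneg (h1 i) (h2 i)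
    · rw [map_add]
      simpa using add_le_add (h1' x hx) (h2' x hx)
    · rw [map_add]
  let o : C_c(Y, ℝ) := ⟨1, HasCompactSupport.of_compactSpace 1⟩
  have ho : ∀ x, o x = 1 := fun x => rfl
  have hpo : c0 ≤ p o := by
    refine le_csInf (hne o) ?_
    rintro r ⟨c, hc, hcf, rfl⟩
    exact hlow c hc hcf
  have hKne : K.Nonempty := by
    by_contra h
    rw [Set.not_nonempty_iff_eq_empty] at h
    have := hlow 0 (by simp) (by simp [h])
    simp at this
    linarith
  obtain ⟨x0, hx0⟩ := hKne
  have hone : o ≠ 0 := by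
    intro h
    have h1 := ho x0
    rw [h] at h1
    simp at h1
  obtain ⟨g, hg1, hg2⟩ := exists_extension_of_le_sublinear
    (LinearPMap.mkSpanSingleton (σ := RingHom.id ℝ) o (1 : ℝ) hone) (fun f => p f / c0)
    (fun t ht f => by simp only [hsmul' t ht f]; ring)
    (fun f g => by simp only [← add_div]; gcongr; exact hadd f g)
    (by
      rintro ⟨f, hf⟩
      obtain ⟨t, rfl⟩ := Submodule.mem_span_singleton.1 hf
      rw [LinearPMap.mkSpanSingleton'_apply]
      simp only [RingHom.id_apply, smul_eq_mul, mul_one]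
      rw [le_div_iff₀ hc0]
      rcases le_or_gt t 0 with h | h
      · exact (mul_nonpos_of_nonpos_of_nonneg h hc0.le).trans (hp0 _)
      · rw [hsmul' t h]
        exact mul_le_mul_of_nonneg_left hpo h.le)
  have hgo : g o = 1 := by
    have := hg1 ⟨o, Submodule.mem_span_singleton_self o⟩
    rw [LinearPMap.mkSpanSingleton_apply] at this
    exact this
  have hgpos : ∀ f, 0 ≤ f → 0 ≤ g f := by
    intro f hf
    have h1 := hg2 (-f)
    have h2 : p (-f) ≤ 0 := hple _ _ ⟨0, by simp, fun x hx => by simpa using hf x, by simp⟩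
    have h3 : p (-f) / c0 ≤ 0 := div_nonpos_of_nonpos_of_nonneg h2 hc0.le
    rw [map_neg] at h1
    linarith
  let Λ : C_c(Y, ℝ) →ₚ[ℝ] ℝ := PositiveLinearMap.mk₀ g hgpos
  have hΛ : ∀ f, Λ f = g f := fun f => rfl
  let μ := RealRMK.rieszMeasure Λ
  have hopen : ∀ U : Set Y, IsOpen U → ∀ r : ℝ,
      (∀ f : C_c(Y, ℝ), (∀ x, 0 ≤ f x ∧ f x ≤ 1) → (∀ x ∉ U, f x = 0) → g f ≤ r) →
      μ U ≤ ENNReal.ofReal r := by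
    intro U hU r h
    by_contra! hlt
    obtain ⟨C, hCU, hC, hlt'⟩ := hU.exists_lt_isCompact hlt
    obtain ⟨f, hf1, hf0, hfc, hf⟩ := exists_continuous_one_zero_of_isCompact hC
      hU.isClosed_compl (disjoint_compl_right_iff_subset.2 hCU)
    have h1 := RealRMK.rieszMeasure_le_of_eq_one Λ (f := ⟨f, hfc⟩) (fun x => (hf x).1) hC
      (fun x hx => hf1 hx)
    have h2 := h ⟨f, hfc⟩ (fun x => hf x) (fun x hx => hf0 hx)
    exact absurd hlt' (not_lt.2 (h1.trans (ENNReal.ofReal_le_ofReal h2)))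
  have huniv : μ univ = 1 := by
    apply le_antisymm
    · have := RealRMK.rieszMeasure_le_of_eq_one Λ (f := o) (fun x => zero_le_one) isCompact_univ
        (fun x _ => ho x)
      rwa [hΛ, hgo, ENNReal.ofReal_one] at this
    · have := RealRMK.le_rieszMeasure_tsupport_subset Λ (f := o)
        (fun x => ⟨zero_le_one, le_rfl⟩) (subset_univ _)
      rwa [hΛ, hgo, ENNReal.ofReal_one] at this
  have hprob : IsProbabilityMeasure μ := ⟨huniv⟩
  refine ⟨μ, hprob, ?_, fun i => hopen _ (hB i) _ fun f hf hf0 => (hg2 f).trans ?_⟩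
  · rw [← prob_compl_eq_zero_iff hKc.isClosed.measurableSet]
    have := hopen Kᶜ hKc.isClosed.isOpen_compl 0 (fun f hf hf0 => (hg2 f).trans ?_)
    · simpa using this
    · apply div_nonpos_of_nonpos_of_nonneg _ hc0.le
      exact hple _ _ ⟨0, by simp, fun x hx => by simp [hf0 x (by simpa using hx)], by simp⟩
  · gcongr
    refine hple _ _ ⟨Finsupp.single i 1, fun j => ?_, fun x hx => ?_, by simp⟩
    · rw [Finsupp.single_apply]
      split_ifs <;> norm_num
    · by_cases hxi : x ∈ B i
      · simpa [hxi] using (hf x).2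
      · simp [hxi, hf0 x hxi]

end Frostman

theorem tsum_levels_le {Y : Type*} (ns : Finset ℕ) (T : ℕ → Finset Y) (f : ℕ → ℝ≥0∞) :
    ∑' p : (⋃ n ∈ ns, ((T n ×ˢ {n} : Finset (Y × ℕ)) : Set (Y × ℕ)) : Set (Y × ℕ)),
      f (p : Y × ℕ).2 ≤ ∑ n ∈ ns, (T n).card * f n := by
  have h := ENNReal.tsum_biUnion_le (fun p : Y × ℕ => f p.2) ns
    (fun n => ((T n ×ˢ {n} : Finset (Y × ℕ)) : Set (Y × ℕ)))
  refine h.trans (Finset.sum_le_sum fun n _ => le_of_eq ?_)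
  have h2 := Finset.tsum_subtype' (T n ×ˢ {n}) (fun p : Y × ℕ => f p.2)
  refine h2.trans ?_
  rw [Finset.sum_product]
  simp

section Combinatorics

variable {ι : Type*}

theorem growth_card_tendsto (F : ℕ → Finset G) (hGrow : GrowthCond F) :
    Tendsto (fun n => ((F n).card : ℝ)) atTop atTop := by
  have hlog : Tendsto (fun n : ℕ => Real.log n) atTop atTop :=
    Real.tendsto_log_atTop.comp tendsto_natCast_atTop_atTop
  refine tendsto_atTop_mono' _ ?_ hlog
  filter_upwards [hGrow.eventually_ge_atTop 1, eventually_gt_atTop 1] with n hn hn1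
  have h0 : 0 < Real.log n := Real.log_pos (by exact_mod_cast hn1)
  rwa [le_div_iff₀ h0, one_mul] at hn

theorem growth_summable (F : ℕ → Finset G) (hGrow : GrowthCond F) (δ : ℝ) (hδ : 0 < δ) :
    Summable (fun n => Real.exp (-δ * ((F n).card : ℝ))) := by
  have h2 : Summable (fun n : ℕ => 1 / (n : ℝ) ^ 2) :=
    Real.summable_one_div_nat_pow.2 (by norm_num)
  refine h2.of_norm_bounded_eventually_nat ?_
  filter_upwards [hGrow.eventually_ge_atTop (2 / δ), eventually_gt_atTop 1] with n hn hn1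
  have hn0 : (0 : ℝ) < n := by exact_mod_cast (by omega : 0 < n)
  have h0 : 0 < Real.log n := Real.log_pos (by exact_mod_cast hn1)
  rw [le_div_iff₀ h0, div_mul_eq_mul_div, div_le_iff₀ hδ] at hn
  rw [Real.norm_of_nonneg (Real.exp_pos _).le]
  have : 1 / (n : ℝ) ^ 2 = Real.exp (-(2 * Real.log n)) := by
    rw [Real.exp_neg, two_mul, Real.exp_add, Real.exp_log hn0, one_div, sq]
  rw [this]
  apply Real.exp_le_exp.2
  linarith

variable [Group G] [MetricSpace X] [MulAction G X]

theorem sep_cover (A : Finset G) (Z : Set X) (ε t : ℝ) (hε : 0 < ε) (ht : 0 < t) (J : Finset ι)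
    (ctr : ι → X) (c : ι → ℝ) (hc : ∀ i, 0 ≤ c i)
    (h : ∀ x ∈ Z, t ≤ ∑ i ∈ J, c i * (bowenBall A (ctr i) ε).indicator (fun _ => (1 : ℝ)) x) :
    ∃ T : Finset X, (T.card : ℝ) * t ≤ ∑ i ∈ J, c i ∧
      Z ⊆ ⋃ y ∈ T, bowenBall A y (2 * ε) := by
  classical
  let Sep : Finset X → Prop := fun T => (∀ y ∈ T, y ∈ Z) ∧
    ∀ y ∈ T, ∀ z ∈ T, z ∈ bowenBall A y (2 * ε) → y = z
  have hbound : ∀ T, Sep T → (T.card : ℝ) * t ≤ ∑ i ∈ J, c i := by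
    rintro T ⟨hTZ, hT⟩
    calc (T.card : ℝ) * t = ∑ y ∈ T, t := by simp
      _ ≤ ∑ y ∈ T, ∑ i ∈ J, c i * (bowenBall A (ctr i) ε).indicator (fun _ => (1 : ℝ)) y :=
        Finset.sum_le_sum fun y hy => h y (hTZ y hy)
      _ = ∑ i ∈ J, c i * ∑ y ∈ T, (bowenBall A (ctr i) ε).indicator (fun _ => (1 : ℝ)) y := by
        rw [Finset.sum_comm]
        simp only [Finset.mul_sum]
      _ ≤ ∑ i ∈ J, c i * 1 := by
        refine Finset.sum_le_sum fun i _ => mul_le_mul_of_nonneg_left ?_ (hc i)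
        simp only [Set.indicator_apply, Finset.sum_boole]
        have : (T.filter (fun y => y ∈ bowenBall A (ctr i) ε)).card ≤ 1 := by
          rw [Finset.card_le_one]
          intro y hy z hz
          rw [Finset.mem_filter] at hy hz
          refine hT y hy.1 z hz.1 fun g hg => ?_
          have h1 := hy.2 g hg
          have h2 := hz.2 g hg
          have h3 := dist_triangle_left (g • y) (g • z) (g • ctr i)
          linarith
        exact_mod_cast this
      _ = _ := by simp
  obtain ⟨M, hM⟩ := exists_nat_gt ((∑ i ∈ J, c i) / t)
  have hcard : ∀ T, Sep T → T.card ≤ M := by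
    intro T hT
    have h1 := hbound T hT
    rw [← le_div_iff₀ ht] at h1
    exact_mod_cast (h1.trans hM.le)
  let P : ℕ → Prop := fun k => ∃ T, Sep T ∧ T.card = k
  have hP0 : P 0 := ⟨∅, by simp [Sep], rfl⟩
  obtain ⟨T, hT, hTk⟩ : P (Nat.findGreatest P M) := Nat.findGreatest_spec (Nat.zero_le M) hP0
  refine ⟨T, hbound T hT, ?_⟩
  intro x hx
  by_contra hcon
  have hcon' : ∀ y ∈ T, x ∉ bowenBall A y (2 * ε) := by
    intro y hy hxy
    exact hcon (mem_iUnion₂.2 ⟨y, hy, hxy⟩)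
  have hxT : x ∉ T := by
    intro hxT
    refine hcon' x hxT fun g _ => ?_
    rw [dist_self]
    linarith
  have hsep : Sep (insert x T) := by
    refine ⟨?_, ?_⟩
    · intro y hy
      rcases Finset.mem_insert.1 hy with rfl | hy
      · exact hx
      · exact hT.1 y hy
    · intro y hy z hz hyz
      rcases Finset.mem_insert.1 hy with rfl | hy' <;>
        rcases Finset.mem_insert.1 hz with rfl | hz'
      · rfl
      · refine absurd ?_ (hcon' z hz')
        intro g hg
        rw [dist_comm]
        exact hyz g hg
      · exact absurd hyz (hcon' y hy')
      · exact hT.2 y hy' z hz' hyz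
  have h1 := Nat.le_findGreatest (P := P) (hcard _ hsep) ⟨_, hsep, rfl⟩
  rw [Finset.card_insert_of_notMem hxT] at h1
  omega

theorem ballM_le_weighted (F : ℕ → Finset G) (K : Set X) (N : ℕ) (ε s s' : ℝ) (hε : 0 < ε)
    (hsum : Summable (fun n => Real.exp (-(s' - s) * ((F n).card : ℝ))))
    (c : {p : X × ℕ // N ≤ p.2} →₀ ℝ) (hc : ∀ i, 0 ≤ c i)
    (hcov : ∀ x ∈ K, 1 ≤ Finsupp.linearCombination ℝ
      (fun i : {p : X × ℕ // N ≤ p.2} =>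
        (bowenBall (F i.1.2) i.1.1 ε).indicator (fun _ => (1 : ℝ)) x) c) :
    ballM F K N (2 * ε) s' ≤ ENNReal.ofReal
      (((∑' n, Real.exp (-(s' - s) * ((F n).card : ℝ))) + 1) *
        Finsupp.linearCombination ℝ
          (fun i : {p : X × ℕ // N ≤ p.2} => Real.exp (-s * ((F i.1.2).card : ℝ))) c) := by
  classical
  obtain ⟨a, ha⟩ : ∃ a : ℕ → ℝ, (fun n => Real.exp (-(s' - s) * ((F n).card : ℝ))) = a := ⟨_, rfl⟩
  have ha0 : ∀ n, 0 < a n := fun n => by rw [← ha]; exact Real.exp_pos _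
  rw [ha] at hsum ⊢
  obtain ⟨S, hS⟩ : ∃ S, ∑' n, a n = S := ⟨_, rfl⟩
  rw [hS]
  have hS0 : 0 ≤ S := hS ▸ tsum_nonneg fun n => (ha0 n).le
  have hS1 : 0 < S + 1 := by linarith
  obtain ⟨lev, hlev⟩ : ∃ lev : {p : X × ℕ // N ≤ p.2} → ℕ, ∀ i, i.1.2 = lev i :=
    ⟨fun i => i.1.2, fun _ => rfl⟩
  let ns : Finset ℕ := c.support.image lev
  let J : ℕ → Finset {p : X × ℕ // N ≤ p.2} := fun n => c.support.filter (fun i => lev i = n)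
  obtain ⟨t, htdef⟩ : ∃ t : ℕ → ℝ, ∀ n, t n = a n / (S + 1) := ⟨_, fun _ => rfl⟩
  have ht : ∀ n, 0 < t n := fun n => by rw [htdef]; exact div_pos (ha0 n) hS1
  let Z : ℕ → Set X := fun n => {x | t n ≤ ∑ i ∈ J n,
    c i * (bowenBall (F n) i.1.1 ε).indicator (fun _ => (1 : ℝ)) x}
  have hT : ∀ n, ∃ T : Finset X, (T.card : ℝ) * t n ≤ ∑ i ∈ J n, c i ∧
      Z n ⊆ ⋃ y ∈ T, bowenBall (F n) y (2 * ε) := fun n =>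
    sep_cover (F n) (Z n) ε (t n) hε (ht n) (J n) (fun i => i.1.1) c hc (fun x hx => hx)
  choose T hT1 hT2 using hT
  have hKZ : K ⊆ ⋃ n ∈ ns, Z n := by
    intro x hx
    by_contra hcon
    have hcon' : ∀ n ∈ ns, ∑ i ∈ J n,
        c i * (bowenBall (F n) i.1.1 ε).indicator (fun _ => (1 : ℝ)) x < t n := by
      intro n hn
      by_contra! hle
      exact hcon (mem_iUnion₂.2 ⟨n, hn, hle⟩)
    have h1 := hcov x hx
    rw [Finsupp.linearCombination_apply, Finsupp.sum,
      ← Finset.sum_fiberwise_of_maps_to (s := c.support) (t := ns) (g := lev)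
        (fun i hi => Finset.mem_image_of_mem _ hi)] at h1
    have h2 : ∑ n ∈ ns, ∑ i ∈ c.support with lev i = n,
        c i • (bowenBall (F i.1.2) i.1.1 ε).indicator (fun _ => (1 : ℝ)) x
        ≤ ∑ n ∈ ns, t n := by
      refine Finset.sum_le_sum fun n hn => le_trans (le_of_eq ?_) (hcon' n hn).le
      refine Finset.sum_congr rfl fun i hi => ?_
      have : i.1.2 = n := (hlev i).trans (Finset.mem_filter.1 hi).2
      rw [this, smul_eq_mul]
    have h3 : ∑ n ∈ ns, t n ≤ S / (S + 1) := by
      simp only [htdef]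
      rw [← Finset.sum_div]
      gcongr
      rw [← hS]
      exact hsum.sum_le_tsum _ (fun n _ => (ha0 n).le)
    have h4 : S / (S + 1) < 1 := by rw [div_lt_one hS1]; linarith
    linarith
  let I : Set (X × ℕ) := ⋃ n ∈ ns, ((T n ×ˢ {n} : Finset (X × ℕ)) : Set (X × ℕ))
  have hIc : I.Countable := by
    refine Set.Finite.countable (Set.Finite.biUnion ns.finite_toSet fun n _ => Finset.finite_toSet _)
  have hIN : ∀ p ∈ I, N ≤ p.2 := by
    intro p hp
    obtain ⟨n, hn, hp⟩ := mem_iUnion₂.1 hp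
    obtain ⟨i, -, rfl⟩ := Finset.mem_image.1 hn
    have : p.2 = lev i := by
      have := Finset.mem_product.1 (Finset.mem_coe.1 hp)
      exact Finset.mem_singleton.1 this.2
    rw [this, ← hlev]
    exact i.2
  have hIK : K ⊆ ⋃ p ∈ I, bowenBall (F p.2) p.1 (2 * ε) := by
    intro x hx
    obtain ⟨n, hn, hxn⟩ := mem_iUnion₂.1 (hKZ hx)
    obtain ⟨y, hy, hxy⟩ := mem_iUnion₂.1 (hT2 n hxn)
    refine mem_iUnion₂.2 ⟨(y, n), mem_iUnion₂.2 ⟨n, hn, ?_⟩, hxy⟩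
    simpa using hy
  have hstep : ballM F K N (2 * ε) s' ≤
      ∑' p : I, ENNReal.ofReal (Real.exp (-s' * ((F (p : X × ℕ).2).card : ℝ))) :=
    iInf_le_of_le I (iInf_le_of_le hIc (iInf_le_of_le hIN (iInf_le _ hIK)))
  refine hstep.trans ?_
  refine (tsum_levels_le ns T
    (fun n => ENNReal.ofReal (Real.exp (-s' * ((F n).card : ℝ))))).trans ?_
  have hval : ∀ n, ((T n).card : ℝ≥0∞) * ENNReal.ofReal (Real.exp (-s' * ((F n).card : ℝ)))
      = ENNReal.ofReal ((T n).card * Real.exp (-s' * ((F n).card : ℝ))) := by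
    intro n
    rw [ENNReal.ofReal_mul (Nat.cast_nonneg _), ENNReal.ofReal_natCast]
  rw [Finset.sum_congr rfl fun n _ => hval n]
  rw [← ENNReal.ofReal_sum_of_nonneg (fun n _ => by positivity)]
  apply ENNReal.ofReal_le_ofReal
  rw [Finsupp.linearCombination_apply, Finsupp.sum,
      ← Finset.sum_fiberwise_of_maps_to (s := c.support) (t := ns) (g := lev)
        (fun i hi => Finset.mem_image_of_mem _ hi), Finset.mul_sum]
  refine Finset.sum_le_sum fun n _ => ?_
  have hrhs : ∑ i ∈ c.support with lev i = n, c i • Real.exp (-s * ((F i.1.2).card : ℝ))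
      = (∑ i ∈ J n, c i) * Real.exp (-s * ((F n).card : ℝ)) := by
    rw [Finset.sum_mul]
    refine Finset.sum_congr rfl fun i hi => ?_
    have : i.1.2 = n := (hlev i).trans (Finset.mem_filter.1 hi).2
    rw [this, smul_eq_mul]
  rw [hrhs]
  have he : Real.exp (-s' * ((F n).card : ℝ)) = a n * Real.exp (-s * ((F n).card : ℝ)) := by
    rw [← ha, ← Real.exp_add]
    congr 1
    ring
  have h5 := hT1 n
  have h6 : (T n).card * a n ≤ (S + 1) * ∑ i ∈ J n, c i := by
    have : (T n).card * t n = (T n).card * a n / (S + 1) := by rw [htdef]; ring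
    rw [this, div_le_iff₀ hS1] at h5
    linarith
  rw [he, ← mul_assoc, ← mul_assoc]
  exact mul_le_mul_of_nonneg_right h6 (Real.exp_pos _).le

theorem bowenBall_isOpen [ContinuousConstSMul G X] (A : Finset G) (x : X) (ε : ℝ) :
    IsOpen (bowenBall A x ε) := by
  have : bowenBall A x ε = ⋂ g ∈ A, {y : X | dist (g • x) (g • y) < ε} := by
    ext y
    simp [bowenBall]
  rw [this]
  refine isOpen_biInter_finset fun g _ => ?_
  exact isOpen_lt (by fun_prop) continuous_const

theorem mem_bowenBall_self (A : Finset G) (x : X) (ε : ℝ) (hε : 0 < ε) :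
    x ∈ bowenBall A x ε := fun g _ => by simpa using hε

theorem exists_measure_aux [CompactSpace X] [ContinuousConstSMul G X] [MeasurableSpace X]
    [BorelSpace X] (F : ℕ → Finset G) (hGrow : GrowthCond F)
    (K : Set X) (hKc : IsCompact K) (s : ℝ) (hs : 0 < s)
    (hlt : ENNReal.ofReal s < bowenEnt F K) :
    ∃ μ : Measure X, IsProbabilityMeasure μ ∧ μ K = 1 ∧ ENNReal.ofReal s ≤ lowLocEnt μ F := by
  classical
  obtain ⟨q, hsq, hq⟩ := ENNReal.lt_iff_exists_nnreal_btwn.1 hlt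
  have hsq' : s < (q : ℝ) := by
    rw [ENNReal.ofReal, ENNReal.coe_lt_coe] at hsq
    exact (Real.le_coe_toNNReal s).trans_lt (by exact_mod_cast hsq)
  obtain ⟨s', hs'⟩ : ∃ s' : ℝ, s' = (q : ℝ) := ⟨_, rfl⟩
  rw [← hs'] at hsq'
  set s1 : ℝ := (s + s') / 2 with hs1
  have hM : ballMtot F K s' ≠ 0 := by
    intro h0
    have : bowenEnt F K ≤ ENNReal.ofReal s' := iInf₂_le s' h0
    rw [hs', ENNReal.ofReal_coe_nnreal] at this
    exact absurd hq (not_lt.2 this)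
  obtain ⟨ε, N, hε, hMN⟩ : ∃ ε : ℝ, ∃ N : ℕ, 0 < ε ∧ ballM F K N ε s' ≠ 0 := by
    by_contra! hcon
    apply hM
    simp only [ballMtot, ballMN, ENNReal.iSup_eq_zero]
    exact fun ε hε N => hcon ε N hε
  have hε2 : 0 < ε / 2 := by linarith
  have hsum := growth_summable F hGrow (s' - s1) (by rw [hs1]; linarith)
  set S := (∑' n, Real.exp (-(s' - s1) * ((F n).card : ℝ))) + 1 with hS
  have hS0 : 0 < S := by
    have : 0 ≤ ∑' n, Real.exp (-(s' - s1) * ((F n).card : ℝ)) :=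
      tsum_nonneg fun n => (Real.exp_pos _).le
    linarith
  have hkey : ∀ c : {p : X × ℕ // N ≤ p.2} →₀ ℝ, (∀ i, 0 ≤ c i) →
      (∀ x ∈ K, 1 ≤ Finsupp.linearCombination ℝ
      (fun i : {p : X × ℕ // N ≤ p.2} =>
        (bowenBall (F i.1.2) i.1.1 (ε / 2)).indicator (fun _ => (1 : ℝ)) x) c) →
      ballM F K N ε s' ≤ ENNReal.ofReal (S * Finsupp.linearCombination ℝ
          (fun i : {p : X × ℕ // N ≤ p.2} => Real.exp (-s1 * ((F i.1.2).card : ℝ))) c) := by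
    intro c hc hcov
    have := ballM_le_weighted F K N (ε / 2) s1 s' hε2 hsum c hc hcov
    rwa [mul_div_cancel₀ ε (two_ne_zero)] at this
  -- a finite cover at level `N`
  obtain ⟨T0, hT0⟩ := hKc.elim_finite_subcover
    (fun i : {p : X × ℕ // N ≤ p.2} => bowenBall (F i.1.2) i.1.1 (ε / 2))
    (fun i => bowenBall_isOpen _ _ _)
    (fun x _ => mem_iUnion.2 ⟨⟨(x, N), le_rfl⟩, mem_bowenBall_self _ _ _ hε2⟩)
  -- the lower bound
  have hmin : min (ballM F K N ε s') 1 ≠ ⊤ := ne_top_of_le_ne_top one_ne_top (min_le_right _ _)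
  set b : ℝ := (min (ballM F K N ε s') 1).toReal with hb
  have hb0 : 0 < b := ENNReal.toReal_pos (by simp [hMN]) hmin
  obtain ⟨μ, hμ, hμK, hμB⟩ := abstract_frostman K hKc
    (fun i : {p : X × ℕ // N ≤ p.2} => bowenBall (F i.1.2) i.1.1 (ε / 2))
    (fun i => bowenBall_isOpen _ _ _)
    (fun i => Real.exp (-s1 * ((F i.1.2).card : ℝ))) (fun i => (Real.exp_pos _).le)
    T0 hT0 (b / S) (div_pos hb0 hS0) (by
      intro c hc hcov
      have h1 := hkey c hc hcov
      have h2 := ENNReal.toReal_mono ENNReal.ofReal_ne_top ((min_le_left _ 1).trans h1)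
      have h3 : 0 ≤ Finsupp.linearCombination ℝ
          (fun i : {p : X × ℕ // N ≤ p.2} => Real.exp (-s1 * ((F i.1.2).card : ℝ))) c :=
        wt_lc_nonneg (fun i => (Real.exp_pos _).le) hc
      rw [ENNReal.toReal_ofReal (mul_nonneg hS0.le h3)] at h2
      rwa [div_le_iff₀' hS0])
  refine ⟨μ, hμ, hμK, ?_⟩
  have hpt : ∀ x, ENNReal.ofReal s ≤ lowLocPt μ F x := by
    intro x
    refine le_iSup₂_of_le (ε / 2) hε2 ?_
    refine le_liminf_of_le (by isBoundedDefault) ?_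
    have hcard := growth_card_tendsto F hGrow
    filter_upwards [eventually_ge_atTop N, hcard.eventually_ge_atTop 1,
      hcard.eventually_ge_atTop ((-Real.log (b / S)) / (s1 - s))] with n hn hn1 hn2
    have hlt1 : 0 < s1 - s := by rw [hs1]; linarith
    rw [div_le_iff₀ hlt1] at hn2
    rw [locTerm]
    split_ifs with h0
    · exact le_top
    · apply ENNReal.ofReal_le_ofReal
      rw [le_div_iff₀ (by linarith)]
      have h1 := hμB ⟨(x, n), hn⟩
      have hpos : 0 < (μ (bowenBall (F n) x (ε / 2))).toReal :=
        ENNReal.toReal_pos h0 (measure_ne_top _ _)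
      have h2 := ENNReal.toReal_mono ENNReal.ofReal_ne_top h1
      rw [ENNReal.toReal_ofReal (div_nonneg (Real.exp_pos _).le (div_pos hb0 hS0).le)] at h2
      have h3 := Real.log_le_log hpos h2
      rw [Real.log_div (Real.exp_pos _).ne' (div_pos hb0 hS0).ne', Real.log_exp] at h3
      linarith
  calc ENNReal.ofReal s = ∫⁻ _, ENNReal.ofReal s ∂μ := by simp
    _ ≤ lowLocEnt μ F := lintegral_mono hpt

end Combinatorics

/-- If `lim_n |F_n|/log n = ∞` and `K ⊆ X` is non-empty compact with
`h^B_top(K,{F_n}) > 0`, then for every `0 < s < h^B_top(K,{F_n})` there is a Borel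
probability measure `μ` with `μ(K) = 1` and `h̲_μ^{loc}({F_n}) ≥ s`; consequently
`h^B_top(K,{F_n}) ≤ sup { h̲_μ^{loc}({F_n}) : μ(K) = 1 }`. -/
theorem bowenEnt_le_iSup_lowLocEnt
    [Group G] [Countable G] [MetricSpace X] [CompactSpace X]
    [MulAction G X] [ContinuousConstSMul G X] [MeasurableSpace X] [BorelSpace X]
    (F : ℕ → Finset G) (hGrow : GrowthCond F)
    (K : Set X) (hK : K.Nonempty) (hKc : IsCompact K)
    (hpos : 0 < bowenEnt F K) :
    (∀ s : ℝ, 0 < s → ENNReal.ofReal s < bowenEnt F K →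
      ∃ μ : Measure X, IsProbabilityMeasure μ ∧ μ K = 1 ∧
        ENNReal.ofReal s ≤ lowLocEnt μ F) ∧
    bowenEnt F K ≤
      ⨆ (μ : Measure X) (_ : IsProbabilityMeasure μ) (_ : μ K = 1), lowLocEnt μ F := by
  have h1 : ∀ s : ℝ, 0 < s → ENNReal.ofReal s < bowenEnt F K →
      ∃ μ : Measure X, IsProbabilityMeasure μ ∧ μ K = 1 ∧
        ENNReal.ofReal s ≤ lowLocEnt μ F :=
    fun s hs hlt => exists_measure_aux F hGrow K hKc s hs hlt
  refine ⟨h1, le_of_forall_lt fun r hr => ?_⟩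
  obtain ⟨q, hrq, hq⟩ := ENNReal.lt_iff_exists_nnreal_btwn.1 hr
  have hq0 : 0 < (q : ℝ) := by
    have : (0 : ℝ≥0∞) < q := lt_of_le_of_lt (zero_le) hrq
    exact_mod_cast this
  obtain ⟨μ, hμ, hμK, hle⟩ := h1 q hq0 (by rwa [ENNReal.ofReal_coe_nnreal])
  rw [ENNReal.ofReal_coe_nnreal] at hle
  refine hrq.trans_le (hle.trans ?_)
  exact le_iSup_of_le μ (le_iSup_of_le hμ (le_iSup_of_le hμK le_rfl))
end
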